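/- arXiv:1711.00180 — 4 statements merged into one kernel-verified Lean document; each statement's English description precedes it below -/
import Mathlib

section
/- Under the standing assumptions, assume further x ≤ 80, and let d be a divisor of m with d ≥ 173. Then log ∏_{p} (1 + 1/(p − 1)) < 3.3·log log d / φ(d), where the product (taken in the real numbers) runs over the odd primes p with p ∤ x₁·y₁ and ℓ_p = d. -/
/-- `ellp a b p` is the least positive integer `ℓ` such that `p ∣ a ^ ℓ - b ^ ℓ`
(and `0` if no such integer exists). -/
noncomputable def ellp (a b p : ℕ) : ℕ := sInf {ℓ : ℕ | 0 < ℓ ∧ p ∣ a ^ ℓ - b ^ ℓ}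

open Finset

/-- Squarefree integers up to `z` coprime to `d`. -/
def sieveSet (d z : ℕ) : Finset ℕ := (Icc 1 z).filter (fun e => Squarefree e ∧ e.Coprime d)

noncomputable def sieveG (d z : ℕ) : ℝ := ∑ e ∈ sieveSet d z, (1 : ℝ) / (Nat.totient e)

noncomputable def sieveLam (d z l : ℕ) : ℝ :=
  (ArithmeticFunction.moebius l : ℝ) * l / sieveG d z *
    ∑ e ∈ (sieveSet d z).filter (fun e => l ∣ e), (1 : ℝ) / (Nat.totient e)

lemma mem_sieveSet {d z e : ℕ} : e ∈ sieveSet d z ↔ (1 ≤ e ∧ e ≤ z) ∧ Squarefree e ∧ e.Coprime d := by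
  simp [sieveSet]

lemma sieveSet_of_dvd {d z e l : ℕ} (he : e ∈ sieveSet d z) (h : l ∣ e) : l ∈ sieveSet d z := by
  rw [mem_sieveSet] at *
  obtain ⟨⟨h1, h2⟩, h3, h4⟩ := he
  exact ⟨⟨Nat.pos_of_dvd_of_pos h h1, (Nat.le_of_dvd h1 h).trans h2⟩, h3.squarefree_of_dvd h,
    h4.coprime_dvd_left h⟩

lemma sieveG_pos {d z : ℕ} (hz : 1 ≤ z) : 0 < sieveG d z := by
  unfold sieveG
  apply Finset.sum_pos
  · intro e he
    have := (mem_sieveSet.1 he).1.1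
    have := Nat.totient_pos.2 this
    positivity
  · exact ⟨1, mem_sieveSet.2 ⟨⟨le_rfl, hz⟩, squarefree_one, Nat.coprime_one_left d⟩⟩

lemma sum_moebius_interval {e f : ℕ} (hf : Squarefree f) (h : e ∣ f) :
    ∑ l ∈ f.divisors.filter (fun l => e ∣ l), (ArithmeticFunction.moebius l : ℝ)
      = if f = e then (ArithmeticFunction.moebius e : ℝ) else 0 := by
  obtain ⟨t, rfl⟩ := h
  have hne : e * t ≠ 0 := hf.ne_zero
  have he0 : e ≠ 0 := left_ne_zero_of_mul hne
  have ht0 : t ≠ 0 := right_ne_zero_of_mul hne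
  have hco : Nat.Coprime e t := Nat.coprime_of_squarefree_mul hf
  have h1 : (e * t).divisors.filter (fun l => e ∣ l) = t.divisors.image (fun s => e * s) := by
    ext l
    simp only [mem_filter, Nat.mem_divisors, mem_image]
    constructor
    · rintro ⟨⟨h1, _⟩, s, rfl⟩
      exact ⟨s, ⟨Nat.dvd_of_mul_dvd_mul_left (Nat.pos_of_ne_zero he0) h1, ht0⟩, rfl⟩
    · rintro ⟨s, ⟨h1, _⟩, rfl⟩
      exact ⟨⟨Nat.mul_dvd_mul_left e h1, hne⟩, dvd_mul_right _ _⟩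
  rw [h1, sum_image (fun a _ b _ hab => Nat.eq_of_mul_eq_mul_left (Nat.pos_of_ne_zero he0) hab)]
  have h2 : ∀ s ∈ t.divisors, ((ArithmeticFunction.moebius (e * s) : ℤ) : ℝ) =
      (ArithmeticFunction.moebius e : ℝ) * (ArithmeticFunction.moebius s : ℝ) := by
    intro s hs
    have := ArithmeticFunction.isMultiplicative_moebius.map_mul_of_coprime
      (hco.coprime_dvd_right (Nat.dvd_of_mem_divisors hs))
    rw [this]; push_cast; ring
  rw [sum_congr rfl h2, ← mul_sum]
  have h3 : ∑ s ∈ t.divisors, (ArithmeticFunction.moebius s : ℤ) = if t = 1 then 1 else 0 := by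
    rw [← ArithmeticFunction.coe_mul_zeta_apply, ArithmeticFunction.moebius_mul_coe_zeta,
      ArithmeticFunction.one_apply]
  have h4 : ∑ s ∈ t.divisors, ((ArithmeticFunction.moebius s : ℤ) : ℝ) = if t = 1 then 1 else 0 := by
    rw [← Int.cast_sum, h3]; split_ifs <;> simp
  rw [h4]
  by_cases ht : t = 1
  · simp [ht]
  · have : e * t ≠ e := by
      intro h
      exact ht (Nat.eq_of_mul_eq_mul_left (Nat.pos_of_ne_zero he0) (by simpa using h))
    simp [ht, this]

lemma sieve_u {d z e : ℕ} (he : e ∈ sieveSet d z) :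
    ∑ l ∈ (sieveSet d z).filter (fun l => e ∣ l), sieveLam d z l / l =
      (ArithmeticFunction.moebius e : ℝ) / (sieveG d z * Nat.totient e) := by
  have h1 : ∀ l ∈ (sieveSet d z).filter (fun l => e ∣ l), sieveLam d z l / l =
      ∑ f ∈ sieveSet d z, (1 / sieveG d z) * ((if l ∣ f then (ArithmeticFunction.moebius l : ℝ) else 0)
        * (1 / (Nat.totient f : ℝ))) := by
    intro l hl
    have hl0 : (l : ℝ) ≠ 0 := by
      have := (mem_sieveSet.1 (mem_filter.1 hl).1).1.1
      positivity
    unfold sieveLam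
    rw [sum_filter, mul_sum, sum_div]
    refine sum_congr rfl fun f _ => ?_
    split_ifs
    · field_simp
    · simp
  rw [sum_congr rfl h1, sum_comm]
  have h2 : ∀ f ∈ sieveSet d z, ∑ l ∈ (sieveSet d z).filter (fun l => e ∣ l),
      (1 / sieveG d z) * ((if l ∣ f then (ArithmeticFunction.moebius l : ℝ) else 0)
        * (1 / (Nat.totient f : ℝ))) =
      if f = e then (1 / sieveG d z) * ((ArithmeticFunction.moebius e : ℝ) * (1 / (Nat.totient e : ℝ))) else 0 := by
    intro f hf
    rw [← mul_sum, ← sum_mul, ← sum_filter, filter_filter]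
    have hset : (sieveSet d z).filter (fun l => e ∣ l ∧ l ∣ f) = f.divisors.filter (fun l => e ∣ l) := by
      ext l
      simp only [mem_filter, Nat.mem_divisors]
      have : f ≠ 0 := (mem_sieveSet.1 hf).2.1.ne_zero
      constructor
      · rintro ⟨_, h2, h3⟩; exact ⟨⟨h3, this⟩, h2⟩
      · rintro ⟨⟨h3, _⟩, h2⟩; exact ⟨sieveSet_of_dvd hf h3, h2, h3⟩
    rw [hset]
    by_cases hef : e ∣ f
    · rw [sum_moebius_interval (mem_sieveSet.1 hf).2.1 hef]
      split_ifs with h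
      · rw [h]
      · simp
    · have hne : f ≠ e := by rintro rfl; exact hef dvd_rfl
      have : f.divisors.filter (fun l => e ∣ l) = ∅ := by
        ext l
        simp only [mem_filter, Nat.mem_divisors, notMem_empty, iff_false]
        rintro ⟨⟨h3, _⟩, h2⟩; exact hef (h2.trans h3)
      simp [this, hne]
  rw [sum_congr rfl h2, sum_ite_eq' , if_pos he]
  ring

lemma gcd_eq_sum {d z a b : ℕ} (ha : a ∈ sieveSet d z) :
    (Nat.gcd a b : ℝ) = ∑ e ∈ sieveSet d z, (Nat.totient e : ℝ) * (if e ∣ a then 1 else 0) * (if e ∣ b then 1 else 0) := by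
  have h : ∀ e ∈ sieveSet d z, (Nat.totient e : ℝ) * (if e ∣ a then 1 else 0) * (if e ∣ b then 1 else 0)
     = if e ∣ a ∧ e ∣ b then (Nat.totient e : ℝ) else 0 := by
    intro e _
    by_cases h1 : e ∣ a <;> by_cases h2 : e ∣ b <;> simp [h1, h2]
  rw [sum_congr rfl h, ← sum_filter]
  have hset : (sieveSet d z).filter (fun e => e ∣ a ∧ e ∣ b) = (Nat.gcd a b).divisors := by
    ext e
    have ha0 : a ≠ 0 := (mem_sieveSet.1 ha).2.1.ne_zero
    simp only [mem_filter, Nat.mem_divisors, Nat.dvd_gcd_iff]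
    constructor
    · rintro ⟨_, h⟩; exact ⟨h, fun h => ha0 (Nat.eq_zero_of_gcd_eq_zero_left h)⟩
    · rintro ⟨h, _⟩; exact ⟨sieveSet_of_dvd ha h.1, h⟩
  rw [hset]
  exact_mod_cast (Nat.sum_totient (Nat.gcd a b)).symm

lemma sieve_Q {d z : ℕ} (hz : 1 ≤ z) :
    ∑ a ∈ sieveSet d z, ∑ b ∈ sieveSet d z, sieveLam d z a * sieveLam d z b / (Nat.lcm a b : ℝ)
      = 1 / sieveG d z := by
  have hG := sieveG_pos (d := d) hz
  have h1 : ∀ a ∈ sieveSet d z, ∀ b ∈ sieveSet d z,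
      sieveLam d z a * sieveLam d z b / (Nat.lcm a b : ℝ) =
      ∑ e ∈ sieveSet d z, (Nat.totient e : ℝ) * ((if e ∣ a then sieveLam d z a / a else 0) *
        (if e ∣ b then sieveLam d z b / b else 0)) := by
    intro a ha b hb
    have ha0 : (a : ℝ) ≠ 0 := by exact_mod_cast (mem_sieveSet.1 ha).2.1.ne_zero
    have hb0 : (b : ℝ) ≠ 0 := by exact_mod_cast (mem_sieveSet.1 hb).2.1.ne_zero
    have hl0 : (Nat.lcm a b : ℝ) ≠ 0 := by
      exact_mod_cast Nat.lcm_ne_zero (mem_sieveSet.1 ha).2.1.ne_zero (mem_sieveSet.1 hb).2.1.ne_zero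
    have hgl : (Nat.gcd a b : ℝ) * Nat.lcm a b = a * b := by exact_mod_cast Nat.gcd_mul_lcm a b
    have : sieveLam d z a * sieveLam d z b / (Nat.lcm a b : ℝ) =
        (sieveLam d z a / a * (sieveLam d z b / b)) * Nat.gcd a b := by
      field_simp
      linear_combination (-(sieveLam d z a * sieveLam d z b)) * hgl
    rw [this, gcd_eq_sum ha, mul_sum]
    refine sum_congr rfl fun e _ => ?_
    split_ifs <;> ring
  rw [sum_congr rfl fun a ha => sum_congr rfl (h1 a ha)]
  have h2 : ∀ a ∈ sieveSet d z, ∑ b ∈ sieveSet d z, ∑ e ∈ sieveSet d z, (Nat.totient e : ℝ) * ((if e ∣ a then sieveLam d z a / a else 0) *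
        (if e ∣ b then sieveLam d z b / b else 0)) = ∑ e ∈ sieveSet d z, (Nat.totient e : ℝ) * ((if e ∣ a then sieveLam d z a / a else 0) *
        ∑ b ∈ sieveSet d z, (if e ∣ b then sieveLam d z b / b else 0)) := by
    intro a _
    rw [sum_comm]
    simp only [mul_sum]
  rw [sum_congr rfl h2, sum_comm]
  have h3 : ∀ e ∈ sieveSet d z, ∑ a ∈ sieveSet d z, (Nat.totient e : ℝ) * ((if e ∣ a then sieveLam d z a / a else 0) *
        ∑ b ∈ sieveSet d z, (if e ∣ b then sieveLam d z b / b else 0)) = (1 / (sieveG d z)^2) * (1 / (Nat.totient e : ℝ)) := by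
    intro e he
    rw [← mul_sum, ← sum_mul, ← sum_filter, sieve_u he]
    have hφ : (Nat.totient e : ℝ) ≠ 0 := by
      have := Nat.totient_pos.2 (mem_sieveSet.1 he).1.1
      positivity
    have hmu : (ArithmeticFunction.moebius e : ℝ) ^ 2 = 1 := by
      have := ArithmeticFunction.moebius_sq_eq_one_of_squarefree (mem_sieveSet.1 he).2.1
      exact_mod_cast this
    field_simp
    rw [hmu]
  rw [sum_congr rfl h3, ← mul_sum]
  change 1 / sieveG d z ^ 2 * sieveG d z = _
  field_simp

lemma sieveLam_one {d z : ℕ} (hz : 1 ≤ z) : sieveLam d z 1 = 1 := by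
  have hG := sieveG_pos (d := d) hz
  unfold sieveLam
  have : (sieveSet d z).filter (fun e => 1 ∣ e) = sieveSet d z := by simp
  rw [this]
  change _ * sieveG d z = 1
  simp; field_simp

lemma sum_inv_totient {l : ℕ} (hl : Squarefree l) :
    ∑ k ∈ l.divisors, (1 : ℝ) / (Nat.totient k) = (l : ℝ) / Nat.totient l := by
  have h1 : ∑ k ∈ l.divisors, (1 : ℝ) / (Nat.totient k) = ∑ k ∈ l.divisors, (Nat.totient k : ℝ) / Nat.totient l := by
    rw [← Nat.sum_div_divisors]
    refine sum_congr rfl fun k hk => ?_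
    obtain ⟨t, rfl⟩ := Nat.dvd_of_mem_divisors hk
    have hk0 : 0 < k := Nat.pos_of_mem_divisors hk
    rw [Nat.mul_div_cancel_left _ hk0]
    have ht0 : 0 < t := Nat.pos_of_ne_zero (right_ne_zero_of_mul hl.ne_zero)
    rw [Nat.totient_mul (Nat.coprime_of_squarefree_mul hl)]
    have := Nat.totient_pos.2 hk0
    have := Nat.totient_pos.2 ht0
    push_cast
    field_simp
  rw [h1, ← sum_div]
  congr 1
  exact_mod_cast Nat.sum_totient l

lemma abs_sieveLam_le {d z l : ℕ} (hl : l ∈ sieveSet d z) : |sieveLam d z l| ≤ 1 := by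
  obtain ⟨⟨hl1, hlz⟩, hlsq, hlco⟩ := mem_sieveSet.1 hl
  have hz : 1 ≤ z := hl1.trans hlz
  have hG := sieveG_pos (d := d) hz
  have hφl := Nat.totient_pos.2 hl1
  set F := (sieveSet d z).filter (fun e => l ∣ e) with hF
  have hFmem : ∀ f ∈ F, ∃ h, f = l * h ∧ h.Coprime l ∧ 0 < h := by
    intro f hf
    obtain ⟨hf1, h, rfl⟩ := mem_filter.1 hf
    have hsq := (mem_sieveSet.1 hf1).2.1
    exact ⟨h, rfl, (Nat.coprime_of_squarefree_mul hsq).symm,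
      Nat.pos_of_ne_zero (right_ne_zero_of_mul hsq.ne_zero)⟩
  have key : (l : ℝ) * ∑ f ∈ F, (1 : ℝ) / Nat.totient f ≤ sieveG d z := by
    have e1 : (l : ℝ) * ∑ f ∈ F, (1 : ℝ) / Nat.totient f =
        ∑ q ∈ l.divisors ×ˢ F, (1 : ℝ) / Nat.totient (q.1 * (q.2 / l)) := by
      rw [sum_product]
      have : ∀ k ∈ l.divisors, ∑ f ∈ F, (1 : ℝ) / Nat.totient (k * (f / l)) =
          (1 / (Nat.totient k : ℝ)) * (Nat.totient l * ∑ f ∈ F, (1 : ℝ) / Nat.totient f) := by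
        intro k hk
        rw [mul_sum, mul_sum]
        refine sum_congr rfl fun f hf => ?_
        obtain ⟨h, rfl, hco, hpos⟩ := hFmem f hf
        rw [Nat.mul_div_cancel_left _ hl1, Nat.totient_mul (hco.symm.coprime_dvd_left (Nat.dvd_of_mem_divisors hk)),
          Nat.totient_mul hco.symm]
        have := Nat.totient_pos.2 hpos
        have := Nat.totient_pos.2 (Nat.pos_of_mem_divisors hk)
        push_cast
        field_simp
      rw [sum_congr rfl this, ← sum_mul, sum_inv_totient hlsq]
      field_simp
    rw [e1]
    have hinj : Set.InjOn (fun q : ℕ × ℕ => q.1 * (q.2 / l)) (l.divisors ×ˢ F : Finset (ℕ × ℕ)) := by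
      rintro ⟨k, f⟩ hq ⟨k', f'⟩ hq' heq
      simp only [coe_product, Set.mem_prod, mem_coe] at hq hq'
      obtain ⟨h, rfl, hco, hpos⟩ := hFmem f hq.2
      obtain ⟨h', rfl, hco', hpos'⟩ := hFmem f' hq'.2
      simp only [Nat.mul_div_cancel_left _ hl1] at heq
      have g1 : Nat.gcd (k * h) l = k := by
        rw [Nat.Coprime.gcd_mul_right_cancel _ hco]
        exact Nat.gcd_eq_left (Nat.dvd_of_mem_divisors hq.1)
      have g2 : Nat.gcd (k' * h') l = k' := by
        rw [Nat.Coprime.gcd_mul_right_cancel _ hco']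
        exact Nat.gcd_eq_left (Nat.dvd_of_mem_divisors hq'.1)
      have hk : k = k' := by rw [← g1, ← g2, heq]
      subst hk
      have := Nat.eq_of_mul_eq_mul_left (Nat.pos_of_mem_divisors hq.1) heq
      rw [this]
    rw [← sum_image (f := fun e => (1 : ℝ) / Nat.totient e) hinj]
    unfold sieveG
    apply sum_le_sum_of_subset_of_nonneg
    · intro e he
      obtain ⟨⟨k, f⟩, hq, rfl⟩ := mem_image.1 he
      rw [mem_product] at hq
      have hf := (mem_filter.1 hq.2).1
      obtain ⟨h, hfe, hco, hpos⟩ := hFmem f hq.2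
      simp only at hfe ⊢
      subst hfe
      rw [Nat.mul_div_cancel_left _ hl1]
      exact sieveSet_of_dvd hf (Nat.mul_dvd_mul_right (Nat.dvd_of_mem_divisors hq.1) h)
    · intros; positivity
  have hmu : |(ArithmeticFunction.moebius l : ℝ)| = 1 := by
    have := ArithmeticFunction.abs_moebius_eq_one_of_squarefree hlsq
    exact_mod_cast this
  unfold sieveLam
  rw [abs_mul, abs_div, abs_mul, hmu, abs_of_pos hG, abs_of_nonneg (by positivity : (0:ℝ) ≤ l),
    abs_of_nonneg (sum_nonneg (by intros; positivity)), one_mul, div_mul_eq_mul_div, div_le_one hG]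
  exact key

lemma count_dvd {q d K : ℕ} (hq : 0 < q) (hco : q.Coprime d) :
    |(((Ioc 0 K).filter (fun k => q ∣ k * d + 1)).card : ℝ) - (K : ℝ) / q| ≤ 1 := by
  obtain ⟨v, hv⟩ : ∃ v : ℕ, q ∣ v * d + 1 := by
    have : NeZero q := ⟨hq.ne'⟩
    refine ⟨(-((d : ZMod q)⁻¹)).val, ?_⟩
    rw [← ZMod.natCast_eq_zero_iff]
    push_cast
    rw [ZMod.natCast_zmod_val]
    have := ZMod.coe_mul_inv_eq_one d hco.symm
    linear_combination -this
  have hset : (Ioc 0 K).filter (fun k => q ∣ k * d + 1) = (Ioc 0 K).filter (fun k => k ≡ v [MOD q]) := by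
    apply filter_congr
    intro k _
    constructor
    · intro hk
      have h1 : k * d + 1 ≡ v * d + 1 [MOD q] :=
        ((Nat.modEq_zero_iff_dvd).2 hk).trans ((Nat.modEq_zero_iff_dvd).2 hv).symm
      have h2 := Nat.ModEq.add_right_cancel' 1 h1
      exact Nat.ModEq.cancel_right_of_coprime hco h2
    · intro hk
      have h1 : k * d + 1 ≡ v * d + 1 [MOD q] := (hk.mul_right d).add_right 1
      exact (Nat.modEq_zero_iff_dvd).1 (h1.trans ((Nat.modEq_zero_iff_dvd).2 hv))
  rw [hset]
  have hc := Nat.Ioc_filter_modEq_card 0 K hq v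
  set c := ((Ioc 0 K).filter (fun k => k ≡ v [MOD q])).card
  have hq' : (0 : ℚ) < q := by exact_mod_cast hq
  have e : ((K : ℚ) - v) / q = (((0 : ℕ) : ℚ) - v) / q + K / q := by push_cast; ring
  have hK : (0 : ℚ) ≤ K / q := by positivity
  have f1 := Int.floor_le (((K : ℚ) - v) / q)
  have f2 := Int.lt_floor_add_one (((K : ℚ) - v) / q)
  have f3 := Int.floor_le ((((0 : ℕ) : ℚ) - v) / q)
  have f4 := Int.lt_floor_add_one ((((0 : ℕ) : ℚ) - v) / q)
  have hmono : ⌊(((0 : ℕ) : ℚ) - v) / q⌋ ≤ ⌊((K : ℚ) - v) / q⌋ := by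
    apply Int.floor_le_floor; rw [e]; linarith
  rw [max_eq_left (by linarith)] at hc
  have hcq : (c : ℚ) = (⌊((K : ℚ) - v) / q⌋ : ℚ) - ⌊(((0 : ℕ) : ℚ) - v) / q⌋ := by exact_mod_cast hc
  have : |(c : ℚ) - (K : ℚ) / q| ≤ 1 := by
    rw [abs_le]; constructor <;> linarith
  have h2 : ((|(c : ℚ) - (K : ℚ) / q| : ℚ) : ℝ) ≤ ((1 : ℚ) : ℝ) := Rat.cast_le.2 this
  push_cast at h2
  exact h2

lemma selberg_bound (d z K : ℕ) (hz : 1 ≤ z) (hzd : z ≤ d) :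
    (((Ioc 0 K).filter (fun k => (k * d + 1).Prime)).card : ℝ) ≤ K / sieveG d z + (z : ℝ) ^ 2 := by
  set E := sieveSet d z with hE
  set lam := sieveLam d z with hlam
  have hG := sieveG_pos (d := d) hz
  have step1 : (((Ioc 0 K).filter (fun k => (k * d + 1).Prime)).card : ℝ) ≤
      ∑ k ∈ Ioc 0 K, (∑ l ∈ E, if l ∣ k * d + 1 then lam l else 0) ^ 2 := by
    rw [card_filter]
    push_cast
    apply sum_le_sum
    intro k hk
    split_ifs with hp
    · have : ∑ l ∈ E, (if l ∣ k * d + 1 then lam l else 0) = 1 := by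
        rw [sum_eq_single 1]
        · simp [hlam, sieveLam_one hz]
        · intro l hl hl1
          rw [if_neg]
          intro hdvd
          rcases (Nat.dvd_prime hp).1 hdvd with h | h
          · exact hl1 h
          · have := (mem_sieveSet.1 hl).1.2
            have hk1 := (mem_Ioc.1 hk).1
            nlinarith
        · intro h
          exact absurd (mem_sieveSet.2 ⟨⟨le_rfl, hz⟩, squarefree_one, Nat.coprime_one_left d⟩) h
      rw [this]; norm_num
    · positivity
  have step2 : ∑ k ∈ Ioc 0 K, (∑ l ∈ E, if l ∣ k * d + 1 then lam l else 0) ^ 2 =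
      ∑ a ∈ E, ∑ b ∈ E, lam a * lam b *
        (((Ioc 0 K).filter (fun k => Nat.lcm a b ∣ k * d + 1)).card : ℝ) := by
    have : ∀ k ∈ Ioc 0 K, (∑ l ∈ E, if l ∣ k * d + 1 then lam l else 0) ^ 2 =
        ∑ a ∈ E, ∑ b ∈ E, lam a * lam b * (if Nat.lcm a b ∣ k * d + 1 then 1 else 0) := by
      intro k _
      rw [sq, sum_mul_sum]
      refine sum_congr rfl fun a _ => sum_congr rfl fun b _ => ?_
      simp only [Nat.lcm_dvd_iff]
      by_cases h1 : a ∣ k * d + 1 <;> by_cases h2 : b ∣ k * d + 1 <;> simp [h1, h2]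
    rw [sum_congr rfl this, sum_comm]
    refine sum_congr rfl fun a _ => ?_
    rw [sum_comm]
    refine sum_congr rfl fun b _ => ?_
    rw [← mul_sum, card_filter]
    push_cast
    rfl
  have step3 : ∑ a ∈ E, ∑ b ∈ E, lam a * lam b *
        (((Ioc 0 K).filter (fun k => Nat.lcm a b ∣ k * d + 1)).card : ℝ) ≤
      ∑ a ∈ E, ∑ b ∈ E, (K * (lam a * lam b / (Nat.lcm a b : ℝ)) + 1) := by
    apply sum_le_sum; intro a ha
    apply sum_le_sum; intro b hb
    have hq : 0 < Nat.lcm a b := Nat.lcm_pos (mem_sieveSet.1 ha).1.1 (mem_sieveSet.1 hb).1.1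
    have hco : (Nat.lcm a b).Coprime d :=
      Nat.Coprime.coprime_dvd_left (Nat.lcm_dvd_mul a b)
        (Nat.Coprime.mul_left (mem_sieveSet.1 ha).2.2 (mem_sieveSet.1 hb).2.2)
    have hc := count_dvd (K := K) hq hco
    have h1 := abs_sieveLam_le ha
    have h2 := abs_sieveLam_le hb
    set c := (((Ioc 0 K).filter (fun k => Nat.lcm a b ∣ k * d + 1)).card : ℝ)
    have h3 : lam a * lam b * (c - (K : ℝ) / Nat.lcm a b) ≤ 1 := by
      refine (le_abs_self _).trans ?_
      rw [abs_mul, abs_mul]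
      have : |lam a| * |lam b| ≤ 1 := mul_le_one₀ h1 (abs_nonneg _) h2
      exact mul_le_one₀ this (abs_nonneg _) hc
    have h4 : lam a * lam b * c = K * (lam a * lam b / (Nat.lcm a b : ℝ)) +
      lam a * lam b * (c - (K : ℝ) / Nat.lcm a b) := by ring
    rw [h4]; linarith
  have step4 : ∑ a ∈ E, ∑ b ∈ E, (K * (lam a * lam b / (Nat.lcm a b : ℝ)) + 1) =
      K * (1 / sieveG d z) + (E.card : ℝ) * E.card := by
    simp only [sum_add_distrib, ← mul_sum]
    rw [sieve_Q hz]
    simp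
  have hcard : (E.card : ℝ) ≤ z := by
    have : E.card ≤ (Icc 1 z).card := card_filter_le _ _
    simp at this
    exact_mod_cast this
  have : (E.card : ℝ) * E.card ≤ z ^ 2 := by rw [sq]; gcongr
  calc _ ≤ _ := step1
    _ = _ := step2
    _ ≤ _ := step3
    _ = _ := step4
    _ ≤ _ := by rw [mul_one_div]; linarith

lemma tot_prod (n : ℕ) (hn : 0 < n) : ∏ p ∈ n.primeFactors, (1 - (p : ℝ)⁻¹)⁻¹ = n / Nat.totient n := by
  have h := Nat.totient_eq_mul_prod_factors n
  have h2 : (Nat.totient n : ℝ) = n * ∏ p ∈ n.primeFactors, (1 - (p : ℝ)⁻¹) := by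
    have h3 := congrArg (Rat.cast (K := ℝ)) h
    push_cast at h3
    exact h3
  have := Nat.totient_pos.2 hn
  rw [prod_inv_distrib, eq_div_iff (by positivity), h2]
  have : ∏ p ∈ n.primeFactors, (1 - (p : ℝ)⁻¹) ≠ 0 := by
    intro h0; rw [h0] at h2; simp at h2; omega
  rw [mul_comm (n : ℝ), inv_mul_cancel_left₀ this]

lemma sum_inv_factored (n : ℕ) (hn : 0 < n) (S : Finset ℕ) (hS : ∀ k ∈ S, k ∈ Nat.factoredNumbers n.primeFactors) :
    ∑ k ∈ S, (k : ℝ)⁻¹ ≤ n / Nat.totient n := by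
  let f : ℕ →* ℝ := ⟨⟨fun k => (k : ℝ)⁻¹, by simp⟩, by intro a b; simp [mul_comm]⟩
  have hf : ∀ {p : ℕ}, p.Prime → ‖f p‖ < 1 := by
    intro p hp
    have : (1 : ℝ) < p := by exact_mod_cast hp.one_lt
    change ‖(p : ℝ)⁻¹‖ < 1
    rw [norm_inv, Real.norm_natCast]
    exact inv_lt_one_of_one_lt₀ this
  obtain ⟨h1, h2⟩ := EulerProduct.summable_and_hasSum_factoredNumbers_prod_filter_prime_geometric hf n.primeFactors
  have h3 : n.primeFactors.filter Nat.Prime = n.primeFactors := by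
    apply filter_true_of_mem; intro p hp; exact Nat.prime_of_mem_primeFactors hp
  rw [h3] at h2
  have h4 : ∏ p ∈ n.primeFactors, (1 - f p)⁻¹ = (n : ℝ) / Nat.totient n := tot_prod n hn
  rw [h4] at h2
  let S' : Finset (Nat.factoredNumbers n.primeFactors) := S.subtype (· ∈ Nat.factoredNumbers n.primeFactors)
  have h5 := sum_le_hasSum S' (fun i _ => by change 0 ≤ ((i : ℕ) : ℝ)⁻¹; positivity) h2
  have h6 : ∑ i ∈ S', f i = ∑ k ∈ S, (k : ℝ)⁻¹ := by
    rw [sum_subtype_of_mem (fun k : ℕ => f k) hS]; rfl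
  rw [← h6]; exact h5

lemma harmonic_le_sieveG (d z : ℕ) (hd : 0 < d) :
    ((harmonic z : ℚ) : ℝ) ≤ (d : ℝ) / Nat.totient d * sieveG d z := by
  let r : ℕ → ℕ := fun n => ∏ p ∈ n.primeFactors.filter (fun p => ¬ p ∣ d), p
  have hrn : ∀ n, r n ∣ n := fun n =>
    (prod_dvd_prod_of_subset _ _ _ (filter_subset _ _)).trans (Nat.prod_primeFactors_dvd n)
  have hr : ∀ n ∈ Icc 1 z, r n ∈ sieveSet d z := by
    intro n hn
    rw [mem_Icc] at hn
    have hpos : 0 < r n := Nat.pos_of_dvd_of_pos (hrn n) hn.1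
    refine mem_sieveSet.2 ⟨⟨hpos, (Nat.le_of_dvd hn.1 (hrn n)).trans hn.2⟩, ?_, ?_⟩
    · have h1 : r n ∣ ∏ p ∈ n.primeFactors, p := prod_dvd_prod_of_subset _ _ _ (filter_subset _ _)
      refine Squarefree.squarefree_of_dvd h1 ?_
      have := UniqueFactorizationMonoid.squarefree_radical (a := n)
      rwa [Nat.radical_eq_prod_primeFactors] at this
    · apply Nat.Coprime.prod_left
      intro p hp
      rw [mem_filter] at hp
      exact (Nat.Prime.coprime_iff_not_dvd (Nat.prime_of_mem_primeFactors hp.1)).2 hp.2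
  rw [harmonic_eq_sum_Icc]
  push_cast
  rw [← sum_fiberwise_of_maps_to hr]
  unfold sieveG
  rw [mul_sum]
  apply sum_le_sum
  intro e he
  obtain ⟨⟨he1, hez⟩, hesq, heco⟩ := mem_sieveSet.1 he
  have hinj : Set.InjOn (fun n => n / e) ((Icc 1 z).filter (fun n => r n = e) : Finset ℕ) := by
    intro a ha b hb hab
    simp only [coe_filter, Set.mem_ofPred_eq] at ha hb
    have h1 : e ∣ a := ha.2 ▸ hrn a
    have h2 : e ∣ b := hb.2 ▸ hrn b
    simp only at hab
    rw [← Nat.div_mul_cancel h1, ← Nat.div_mul_cancel h2, hab]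
  have h1 : ∑ n ∈ (Icc 1 z).filter (fun n => r n = e), (n : ℝ)⁻¹ =
      (e : ℝ)⁻¹ * ∑ k ∈ ((Icc 1 z).filter (fun n => r n = e)).image (fun n => n / e), (k : ℝ)⁻¹ := by
    rw [sum_image hinj, mul_sum]
    refine sum_congr rfl fun n hn => ?_
    have h1 : e ∣ n := (mem_filter.1 hn).2 ▸ hrn n
    rw [← mul_inv, ← Nat.cast_mul, Nat.mul_div_cancel' h1]
  rw [h1]
  have h2 := sum_inv_factored (e * d) (Nat.mul_pos he1 hd)
    (((Icc 1 z).filter (fun n => r n = e)).image (fun n => n / e)) (by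
      intro k hk
      obtain ⟨n, hn, rfl⟩ := mem_image.1 hk
      rw [mem_filter, mem_Icc] at hn
      have hen : e ∣ n := hn.2 ▸ hrn n
      have hn0 : n / e ≠ 0 := by
        have := Nat.div_pos (Nat.le_of_dvd hn.1.1 hen) he1
        omega
      rw [Nat.mem_factoredNumbers']
      intro p hp hpd
      have hpn : p ∣ n := hpd.trans (Nat.div_dvd_of_dvd hen)
      rw [Nat.mem_primeFactors]
      refine ⟨hp, ?_, (Nat.mul_pos he1 hd).ne'⟩
      by_cases h : p ∣ d
      · exact h.mul_left e
      · apply Dvd.dvd.mul_right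
        rw [← hn.2]
        exact dvd_prod_of_mem (fun p => p) (mem_filter.2 ⟨Nat.mem_primeFactors.2 ⟨hp, hpn, by omega⟩, h⟩))
  rw [Nat.totient_mul heco] at h2
  have hφe := Nat.totient_pos.2 he1
  have hφd := Nat.totient_pos.2 hd
  calc _ ≤ (e : ℝ)⁻¹ * (((e * d : ℕ) : ℝ) / ((Nat.totient e * Nat.totient d : ℕ) : ℝ)) := by gcongr
    _ = _ := by push_cast; field_simp

noncomputable def cntA (d K : ℕ) : ℝ := (((Ioc 0 K).filter (fun k => (k * d + 1).Prime)).card : ℝ)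

lemma totient_even_le (n : ℕ) : Nat.totient (2 * n) ≤ n := by
  induction n using Nat.strong_induction_on with
  | _ n ih =>
    rcases Nat.even_or_odd n with h | h
    · rcases Nat.eq_zero_or_pos n with h0 | h0
      · simp [h0]
      · rw [Nat.totient_two_mul_of_even h]
        obtain ⟨m, rfl⟩ := h
        have := ih m (by omega)
        rw [← two_mul]; omega
    · rw [Nat.totient_two_mul_of_odd h]; exact Nat.totient_le n

lemma one_le_D {d : ℕ} (hd : 0 < d) : (1 : ℝ) ≤ (d : ℝ) / Nat.totient d := by
  have := Nat.totient_pos.2 hd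
  rw [one_le_div (by positivity)]
  exact_mod_cast Nat.totient_le d

lemma cntA_parity {d : ℕ} (hd : 2 ≤ d) (K : ℕ) :
    cntA d K ≤ (d : ℝ) / Nat.totient d * (K / 2) := by
  have hφ := Nat.totient_pos.2 (by omega : 0 < d)
  have hD := one_le_D (by omega : 0 < d)
  unfold cntA
  rcases Nat.even_or_odd d with h | h
  · have hD2 : (2 : ℝ) ≤ (d : ℝ) / Nat.totient d := by
      rw [le_div_iff₀ (by positivity)]
      obtain ⟨m, rfl⟩ := h
      rw [← two_mul]
      exact_mod_cast Nat.mul_le_mul_left 2 (totient_even_le m)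
    have h1 : (((Ioc 0 K).filter (fun k => (k * d + 1).Prime)).card : ℝ) ≤ K := by
      have := card_filter_le (Ioc 0 K) (fun k => (k * d + 1).Prime)
      simp only [Nat.card_Ioc] at this
      exact_mod_cast this
    have : (0 : ℝ) ≤ K := by positivity
    nlinarith
  · have h1 : (((Ioc 0 K).filter (fun k => (k * d + 1).Prime)).card) ≤ K / 2 := by
      rw [← Nat.Ioc_filter_dvd_card_eq_div]
      apply card_le_card
      intro k hk
      rw [mem_filter] at hk ⊢
      refine ⟨hk.1, ?_⟩
      by_contra hodd
      have hk' : Odd k := by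
        rw [← Nat.not_even_iff_odd, even_iff_two_dvd]; exact hodd
      have he : Even (k * d + 1) := (hk'.mul h).add_one
      have h2 := (Nat.Prime.even_iff hk.2).1 he
      have := (mem_Ioc.1 hk.1).1
      nlinarith
    have h2 : (((Ioc 0 K).filter (fun k => (k * d + 1).Prime)).card : ℝ) ≤ (K : ℝ) / 2 := by
      refine (Nat.cast_le.2 h1).trans ?_
      exact_mod_cast Nat.cast_div_le (m := K) (n := 2) (α := ℝ)
    have : (0 : ℝ) ≤ (K : ℝ) / 2 := by positivity
    nlinarith

lemma cntA_selberg {d K : ℕ} (hK : 2 ≤ K) (hKd : K ≤ d) :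
    cntA d K ≤ (d : ℝ) / Nat.totient d * (3 * K / Real.log K) + (K : ℝ) ^ ((2 : ℝ) / 3) := by
  have hD := one_le_D (by omega : 0 < d)
  set D := (d : ℝ) / Nat.totient d
  have hK1 : (1 : ℝ) < K := by exact_mod_cast (by omega : 1 < K)
  have hlog : 0 < Real.log K := Real.log_pos hK1
  set t : ℝ := (K : ℝ) ^ ((1 : ℝ) / 3) with ht
  have ht1 : 1 ≤ t := Real.one_le_rpow hK1.le (by norm_num)
  have htK : t ≤ K := by
    calc t ≤ (K : ℝ) ^ (1 : ℝ) := Real.rpow_le_rpow_of_exponent_le hK1.le (by norm_num)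
      _ = K := Real.rpow_one _
  set z := ⌊t⌋₊ with hz
  have hz1 : 1 ≤ z := Nat.one_le_floor_iff _ |>.2 ht1
  have hzt : (z : ℝ) ≤ t := Nat.floor_le (by linarith)
  have hzd : z ≤ d := by
    have : (z : ℝ) ≤ d := hzt.trans (htK.trans (by exact_mod_cast hKd))
    exact_mod_cast this
  have h1 := selberg_bound d z K hz1 hzd
  have h2 := harmonic_le_sieveG d z (by omega)
  have h3 := log_add_one_le_harmonic z
  have h4 : Real.log K / 3 ≤ Real.log ((z + 1 : ℕ) : ℝ) := by
    have : Real.log t = Real.log K / 3 := by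
      rw [ht, Real.log_rpow (by linarith)]; ring
    rw [← this]
    apply Real.log_le_log (by linarith)
    push_cast
    exact (Nat.lt_floor_add_one t).le
  have hG := sieveG_pos (d := d) hz1
  have h5 : Real.log K / 3 ≤ D * sieveG d z := h4.trans (h3.trans h2)
  have h6 : (K : ℝ) / sieveG d z ≤ D * (3 * K / Real.log K) := by
    rw [div_le_iff₀ hG]
    have : D * (3 * K / Real.log K) * sieveG d z = (3 * K / Real.log K) * (D * sieveG d z) := by ring
    rw [this]
    calc (K : ℝ) = (3 * K / Real.log K) * (Real.log K / 3) := by field_simp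
      _ ≤ _ := by gcongr
  have h7 : (z : ℝ) ^ 2 ≤ (K : ℝ) ^ ((2 : ℝ) / 3) := by
    have : (K : ℝ) ^ ((2 : ℝ) / 3) = t ^ 2 := by
      rw [ht, ← Real.rpow_natCast, ← Real.rpow_mul (by linarith)]; norm_num
    rw [this]; gcongr
  unfold cntA
  linarith

lemma tele_inv (k n : ℕ) (hk : 1 ≤ k) (hkn : k ≤ n) :
    ∑ j ∈ Ico k n, (1 : ℝ) / (j * (j + 1)) = 1 / k - 1 / n := by
  induction n, hkn using Nat.le_induction with
  | base => simp
  | succ n hn ih =>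
    rw [sum_Ico_succ_top hn, ih]
    have : (n : ℝ) ≠ 0 := by exact_mod_cast (by omega : n ≠ 0)
    have : (k : ℝ) ≠ 0 := by exact_mod_cast (by omega : k ≠ 0)
    push_cast
    field_simp
    ring

lemma abel (d n : ℕ) (hn : 1 ≤ n) (P : Finset ℕ) (hP : ∀ k ∈ P, 1 ≤ k ∧ (k * d + 1).Prime) :
    ∑ k ∈ P, (1 : ℝ) / k ≤ ∑ j ∈ Ico 1 n, cntA d j / (j * (j + 1)) + (P.card : ℝ) / n := by
  have h1 : ∀ k ∈ P, (1 : ℝ) / k ≤ ∑ j ∈ Ico 1 n, (if k ≤ j then (1 : ℝ) / (j * (j + 1)) else 0) + 1 / n := by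
    intro k hk
    have hk1 := (hP k hk).1
    rw [← sum_filter]
    rcases le_total k n with h | h
    · have : (Ico 1 n).filter (fun j => k ≤ j) = Ico k n := by
        ext j; simp only [mem_filter, mem_Ico]; omega
      rw [this, tele_inv k n hk1 h]; linarith
    · have h2 : (1 : ℝ) / k ≤ 1 / n := by
        apply one_div_le_one_div_of_le
        · exact_mod_cast hn
        · exact_mod_cast h
      have : 0 ≤ ∑ j ∈ (Ico 1 n).filter (fun j => k ≤ j), (1 : ℝ) / (j * (j + 1)) :=
        sum_nonneg (by intros; positivity)
      linarith
  refine (sum_le_sum h1).trans ?_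
  rw [sum_add_distrib, sum_const, nsmul_eq_mul, mul_one_div, sum_comm]
  gcongr with j hj
  rw [← sum_filter, sum_const, nsmul_eq_mul, mul_one_div]
  gcongr
  unfold cntA
  have : P.filter (fun k => k ≤ j) ⊆ (Ioc 0 j).filter (fun k => (k * d + 1).Prime) := by
    intro k hk
    rw [mem_filter] at hk
    rw [mem_filter, mem_Ioc]
    have := hP k hk.1
    exact ⟨⟨by omega, hk.2⟩, this.2⟩
  exact_mod_cast card_le_card this

lemma cntA_small_sum {d : ℕ} (hd : 2 ≤ d) (n : ℕ) (hn : 1 ≤ n) :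
    ∑ j ∈ Ico 1 n, cntA d j / (j * (j + 1)) ≤ (d : ℝ) / Nat.totient d * (Real.log n / 2) := by
  have hD := one_le_D (by omega : 0 < d)
  induction n, hn using Nat.le_induction with
  | base => simp
  | succ n hn ih =>
    rw [sum_Ico_succ_top hn]
    have hA := cntA_parity hd n
    set D := (d : ℝ) / Nat.totient d
    have hn0 : (0 : ℝ) < n := by exact_mod_cast hn
    have h1 : cntA d n / (n * (n + 1)) ≤ D * (1 / (n + 1) / 2) := by
      rw [div_le_iff₀ (by positivity)]
      calc cntA d n ≤ D * (n / 2) := hA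
        _ = _ := by field_simp
    have h2 : (1 : ℝ) / (n + 1) ≤ Real.log ((n + 1 : ℕ) : ℝ) - Real.log n := by
      push_cast
      rw [← Real.log_div (by positivity) (by positivity)]
      have := Real.one_sub_inv_le_log_of_pos (x := ((n : ℝ) + 1) / n) (by positivity)
      refine le_trans (le_of_eq ?_) this
      field_simp
      ring
    have h3 : D * (1 / (n + 1) / 2) ≤ D * ((Real.log ((n + 1 : ℕ) : ℝ) - Real.log n) / 2) := by gcongr
    have : D * ((Real.log ((n + 1 : ℕ) : ℝ) - Real.log n) / 2) = D * (Real.log ((n + 1 : ℕ) : ℝ) / 2) - D * (Real.log n / 2) := by ring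
    linarith

lemma loglog_step {s : ℝ} (hs : 2 ≤ s) :
    1 / ((s + 1) * Real.log (s + 1)) ≤ Real.log (Real.log (s + 1)) - Real.log (Real.log s) := by
  have a0 : 0 < Real.log s := Real.log_pos (by linarith)
  have a1 : 0 < Real.log (s + 1) := Real.log_pos (by linarith)
  rw [← Real.log_div a1.ne' a0.ne']
  have h1 := Real.one_sub_inv_le_log_of_pos (x := Real.log (s + 1) / Real.log s) (by positivity)
  refine le_trans ?_ h1
  have h2 := Real.one_sub_inv_le_log_of_pos (x := (s + 1) / s) (by positivity)
  rw [Real.log_div (by linarith) (by linarith)] at h2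
  have h3 : 1 - ((s + 1) / s)⁻¹ = 1 / (s + 1) := by field_simp; ring
  rw [h3] at h2
  have h4 : 1 - (Real.log (s + 1) / Real.log s)⁻¹ = (Real.log (s + 1) - Real.log s) / Real.log (s + 1) := by
    field_simp
  rw [h4, ← div_div]
  gcongr

lemma cube_step {s : ℝ} (hs : 2 ≤ s) :
    (s + 1) ^ ((2 : ℝ) / 3) / (s + 1) ^ 2 ≤ 3 * (s ^ (-(1 : ℝ) / 3) - (s + 1) ^ (-(1 : ℝ) / 3)) := by
  have hpos : 0 < s + 1 := by linarith
  have b := _root_.rpow_one_add_le_one_add_mul_self (s := -(1 / (s + 1))) (p := 1 / 3)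
    (by rw [neg_le_neg_iff, div_le_one hpos]; linarith) (by norm_num) (by norm_num)
  have e1 : 1 + -(1 / (s + 1)) = s / (s + 1) := by field_simp; ring
  rw [e1, Real.div_rpow (by linarith) (by linarith)] at b
  set u := s ^ ((1 : ℝ) / 3) with hu
  set v := (s + 1) ^ ((1 : ℝ) / 3) with hv
  have hu0 : 0 < u := Real.rpow_pos_of_pos (by linarith) _
  have hv0 : 0 < v := Real.rpow_pos_of_pos (by linarith) _
  have e2 : s ^ (-(1 : ℝ) / 3) = u⁻¹ := by rw [hu, neg_div, Real.rpow_neg (by linarith)]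
  have e3 : (s + 1) ^ (-(1 : ℝ) / 3) = v⁻¹ := by rw [hv, neg_div, Real.rpow_neg (by linarith)]
  have e4 : (s + 1) ^ ((2 : ℝ) / 3) = v ^ 2 := by
    rw [hv, ← Real.rpow_natCast, ← Real.rpow_mul hpos.le]; norm_num
  have e5 : v ^ 3 = s + 1 := by
    rw [hv, ← Real.rpow_natCast, ← Real.rpow_mul hpos.le]; norm_num
  rw [e2, e3, e4]
  rw [← e5] at b ⊢
  have hr : u ≤ v * (1 + 1 / 3 * -(1 / v ^ 3)) := by
    rw [div_le_iff₀ hv0] at b; linarith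
  set w : ℝ := 1 / 3 * (1 / v ^ 3) with hw
  have hw0 : 0 < w := by positivity
  have hr' : u ≤ v * (1 - w) := by rw [hw]; linarith
  have hw1 : 0 < 1 - w := by
    by_contra h
    push Not at h
    nlinarith
  have h1 : v⁻¹ * (1 + w) ≤ u⁻¹ := by
    rw [inv_mul_le_iff₀ hv0, ← div_eq_mul_inv, le_div_iff₀ hu0]
    nlinarith [mul_pos hv0 hw0]
  have h2 : v ^ 2 / (v ^ 3) ^ 2 = 3 * (v⁻¹ * w) := by rw [hw]; field_simp
  rw [h2]; linarith

lemma cntA_large_sum {d : ℕ} (n : ℕ) (hn : 513 ≤ n) (hnd : n ≤ d) :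
    ∑ j ∈ Ico 1 n, cntA d j / (j * (j + 1)) ≤ (d : ℝ) / Nat.totient d *
      (Real.log 513 / 2 + 3 * (Real.log (Real.log ((n : ℝ) - 1)) - Real.log (Real.log 512)) +
        3 * ((512 : ℝ) ^ (-(1 : ℝ) / 3) - ((n : ℝ) - 1) ^ (-(1 : ℝ) / 3))) := by
  have hD := one_le_D (by omega : 0 < d)
  induction n, hn using Nat.le_induction with
  | base =>
    have := cntA_small_sum (d := d) (by omega) 513 (by norm_num)
    refine this.trans (le_of_eq ?_)
    norm_num
  | succ n hn ih =>
    have ih := ih (by omega)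
    rw [sum_Ico_succ_top (by omega)]
    have hA := cntA_selberg (d := d) (K := n) (by omega) (by omega)
    set D := (d : ℝ) / Nat.totient d
    have hn0 : (513 : ℝ) ≤ n := by exact_mod_cast hn
    have l := loglog_step (s := (n : ℝ) - 1) (by linarith)
    have c := cube_step (s := (n : ℝ) - 1) (by linarith)
    rw [sub_add_cancel] at l c
    have hlog : 0 < Real.log n := Real.log_pos (by linarith)
    have hr : 0 < (n : ℝ) ^ ((2 : ℝ) / 3) := Real.rpow_pos_of_pos (by linarith) _
    have h1 : cntA d n / (n * (n + 1)) ≤ D * (3 * (1 / (n * Real.log n)) + (n : ℝ) ^ ((2 : ℝ) / 3) / (n : ℝ) ^ 2) := by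
      calc cntA d n / (n * (n + 1)) ≤ (D * (3 * n / Real.log n) + (n : ℝ) ^ ((2 : ℝ) / 3)) / (n * (n + 1)) := by gcongr
        _ ≤ (D * (3 * n / Real.log n) + D * (n : ℝ) ^ ((2 : ℝ) / 3)) / (n * n) := by
            gcongr
            · nlinarith
            · linarith
        _ = _ := by field_simp
    have h2 : D * (3 * (1 / (n * Real.log n)) + (n : ℝ) ^ ((2 : ℝ) / 3) / (n : ℝ) ^ 2) ≤
        D * (3 * (Real.log (Real.log n) - Real.log (Real.log ((n : ℝ) - 1))) +
          3 * (((n : ℝ) - 1) ^ (-(1 : ℝ) / 3) - (n : ℝ) ^ (-(1 : ℝ) / 3))) := by gcongr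
    push_cast
    rw [add_sub_cancel_right]
    calc _ ≤ _ := add_le_add ih (h1.trans h2)
      _ = _ := by ring

lemma log80 : Real.log 80 ≤ 4.4 := by
  have h : Real.log ((80 : ℝ) ^ 3) ≤ Real.log ((2 : ℝ) ^ 19) := Real.log_le_log (by norm_num) (by norm_num)
  rw [Real.log_pow, Real.log_pow] at h
  have := Real.log_two_lt_d9
  push_cast at h
  linarith

lemma log_ge_of_pow (a : ℝ) (p q : ℕ) (ha : 0 < a) (h : (2 : ℝ) ^ p ≤ a ^ q) :
    p * Real.log 2 ≤ q * Real.log a := by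
  have h := Real.log_le_log (by positivity) h
  rwa [Real.log_pow, Real.log_pow] at h

lemma final_num {d : ℕ} (hd : 173 ≤ d) :
    ∑ j ∈ Ico 1 d, cntA d j / (j * (j + 1)) + Real.log 80 / Real.log d <
      (d : ℝ) / Nat.totient d * (3.3 * Real.log (Real.log d)) := by
  have hD := one_le_D (by omega : 0 < d)
  have s1 := cntA_small_sum (d := d) (by omega) d (by omega)
  have hl : ∀ h : 513 ≤ d, _ := fun h => cntA_large_sum (d := d) d h le_rfl
  set D := (d : ℝ) / Nat.totient d
  set L := Real.log d with hLdef
  have hdR : (173 : ℝ) ≤ d := by exact_mod_cast hd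
  have hL5 : 5 ≤ L := by
    rw [hLdef, Real.le_log_iff_exp_le (by linarith)]
    have h1 : Real.exp 5 = Real.exp 1 ^ 5 := by rw [← Real.exp_nat_mul]; norm_num
    have h2 := Real.exp_one_lt_d9
    have : Real.exp 1 ^ 5 ≤ 2.7182818286 ^ 5 := by gcongr
    rw [h1]
    refine this.trans (le_trans (by norm_num) hdR)
  have l2a := Real.log_two_gt_d9
  have l2b := Real.log_two_lt_d9
  have h80 : Real.log 80 / L ≤ 4.4 / L := by
    have := log80
    gcongr
  suffices h : ∃ X, ∑ j ∈ Ico 1 d, cntA d j / (j * (j + 1)) ≤ D * X ∧ X + 4.4 / L < 3.3 * Real.log L by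
    obtain ⟨X, hX, hX2⟩ := h
    have h0 : 0 < 4.4 / L := by positivity
    have : 4.4 / L ≤ D * (4.4 / L) := by nlinarith
    have : D * (X + 4.4 / L) < D * (3.3 * Real.log L) := by gcongr
    linarith
  by_cases h15 : L ≤ 15
  · refine ⟨L / 2, s1, ?_⟩
    rcases le_total L 8 with h | h
    · have a := log_ge_of_pow 5 9 4 (by norm_num) (by norm_num)
      have b : Real.log 5 ≤ Real.log L := Real.log_le_log (by norm_num) hL5
      have c : 4.4 / L ≤ 4.4 / 5 := by gcongr
      norm_num at a c ⊢
      linarith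
    rcases le_total L 12 with h' | h'
    · have a := log_ge_of_pow 8 3 1 (by norm_num) (by norm_num)
      have b : Real.log 8 ≤ Real.log L := Real.log_le_log (by norm_num) h
      have c : 4.4 / L ≤ 4.4 / 8 := by gcongr
      norm_num at a c ⊢
      linarith
    · have a := log_ge_of_pow 12 7 2 (by norm_num) (by norm_num)
      have b : Real.log 12 ≤ Real.log L := Real.log_le_log (by norm_num) h'
      have c : 4.4 / L ≤ 4.4 / 12 := by gcongr
      norm_num at a c ⊢
      linarith
  · push Not at h15
    have l1024 : Real.log 1024 ≤ 7 := by
      have : Real.log 1024 = 10 * Real.log 2 := by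
        rw [show (1024 : ℝ) = 2 ^ 10 by norm_num, Real.log_pow]; norm_num
      linarith
    have l513 : Real.log 513 ≤ 10 * Real.log 2 := by
      have h1 : Real.log 513 ≤ Real.log 1024 := Real.log_le_log (by norm_num) (by norm_num)
      have : Real.log 1024 = 10 * Real.log 2 := by
        rw [show (1024 : ℝ) = 2 ^ 10 by norm_num, Real.log_pow]; norm_num
      linarith
    have hd513 : 513 ≤ d := by
      by_contra h
      push Not at h
      have : (d : ℝ) ≤ 1024 := by exact_mod_cast (by omega : d ≤ 1024)
      have : L ≤ Real.log 1024 := Real.log_le_log (by linarith) this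
      linarith
    have hdR' : (513 : ℝ) ≤ d := by exact_mod_cast hd513
    refine ⟨_, hl hd513, ?_⟩
    have l512 : Real.log 512 = 9 * Real.log 2 := by
      rw [show (512 : ℝ) = 2 ^ 9 by norm_num, Real.log_pow]; norm_num
    have ll : Real.log 6 ≤ Real.log (Real.log 512) := Real.log_le_log (by norm_num) (by linarith)
    have a6 := log_ge_of_pow 6 12 5 (by norm_num) (by norm_num)
    have lld : Real.log (Real.log ((d : ℝ) - 1)) ≤ Real.log L := by
      apply Real.log_le_log
      · exact Real.log_pos (by linarith)
      · exact Real.log_le_log (by linarith) (by linarith)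
    have e8 : (512 : ℝ) ^ (-(1 : ℝ) / 3) = 1 / 8 := by
      rw [show (512 : ℝ) = 8 ^ (3 : ℝ) by norm_num, ← Real.rpow_mul (by norm_num)]
      norm_num
    have p0 : 0 ≤ ((d : ℝ) - 1) ^ (-(1 : ℝ) / 3) := Real.rpow_nonneg (by linarith) _
    have c : 4.4 / L ≤ 4.4 / 15 := by gcongr
    have lpos : 0 < Real.log L := Real.log_pos (by linarith)
    rw [e8]
    norm_num at a6 c ⊢
    linarith

lemma ellp_facts {a b p d : ℕ} (hab : b ≤ a) (hp : p.Prime) (hnd : ¬ p ∣ a * b) (hd : 0 < d)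
    (h : ellp a b p = d) : p ∣ a ^ d - b ^ d ∧ d ∣ p - 1 := by
  have hne : {ℓ : ℕ | 0 < ℓ ∧ p ∣ a ^ ℓ - b ^ ℓ}.Nonempty := by
    by_contra hc
    rw [Set.not_nonempty_iff_eq_empty] at hc
    unfold ellp at h
    rw [hc, Nat.sInf_empty] at h
    omega
  have hmem := Nat.sInf_mem hne
  change 0 < ellp a b p ∧ p ∣ a ^ (ellp a b p) - b ^ (ellp a b p) at hmem
  rw [h] at hmem
  refine ⟨hmem.2, ?_⟩
  have : Fact p.Prime := ⟨hp⟩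
  have hiff : ∀ l, p ∣ a ^ l - b ^ l ↔ (a : ZMod p) ^ l = (b : ZMod p) ^ l := by
    intro l
    rw [← ZMod.natCast_eq_zero_iff, Nat.cast_sub (Nat.pow_le_pow_left hab l), sub_eq_zero]
    push_cast
    rfl
  have ha : (a : ZMod p) ≠ 0 := by
    rw [Ne, ZMod.natCast_eq_zero_iff]; exact fun h => hnd (h.mul_right b)
  have hb : (b : ZMod p) ≠ 0 := by
    rw [Ne, ZMod.natCast_eq_zero_iff]; exact fun h => hnd (h.mul_left a)
  set u : ZMod p := (a : ZMod p) / b with hu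
  have hu0 : u ≠ 0 := div_ne_zero ha hb
  have hpow : ∀ l, u ^ l = 1 ↔ (a : ZMod p) ^ l = (b : ZMod p) ^ l := by
    intro l
    rw [hu, div_pow, div_eq_one_iff_eq (pow_ne_zero l hb)]
  have h1 : orderOf u ∣ d := orderOf_dvd_of_pow_eq_one ((hpow d).2 ((hiff d).1 hmem.2))
  have hpos : 0 < orderOf u := Nat.pos_of_dvd_of_pos h1 hd
  have h2 : d ≤ orderOf u := by
    rw [← h]
    exact Nat.sInf_le ⟨hpos, (hiff _).2 ((hpow _).1 (pow_orderOf_eq_one u))⟩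
  have h3 : d = orderOf u := le_antisymm h2 (Nat.le_of_dvd hd h1)
  rw [h3]
  exact ZMod.orderOf_dvd_card_sub_one hu0

theorem log_prod_lt_of_le_173 (x y z m n : ℕ) (hx : 0 < x) (hy : 0 < y) (hz : 0 < z)
    (hm : 0 < m) (hn : 0 < n) (hxy : y < x) (hzxy : z ≤ x - y)
    (hgcd : Nat.gcd m n = 1) (hmn : n < m)
    (heq : Nat.totient (z * ((x ^ m - y ^ m) / (x - y))) =
      z * ((x ^ n - y ^ n) / (x - y)))
    (hx80 : x ≤ 80)
    (d₁ x₁ y₁ : ℕ) (hd₁ : d₁ = Nat.gcd x y) (hx₁ : x₁ = x / d₁) (hy₁ : y₁ = y / d₁)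
    (d : ℕ) (hd : d ∣ m) (hd173 : 173 ≤ d) :
    Real.log (∏ p ∈ (Finset.range (x₁ ^ d - y₁ ^ d + 1)).filter
        (fun p => p.Prime ∧ Odd p ∧ ¬ p ∣ x₁ * y₁ ∧ ellp x₁ y₁ p = d),
      (1 + 1 / ((p : ℝ) - 1))) <
      3.3 * Real.log (Real.log d) / (Nat.totient d) := by
  have hd0 : 0 < d := by omega
  have hlt : y₁ < x₁ := by
    have h1 : d₁ ∣ x := hd₁ ▸ Nat.gcd_dvd_left x y
    have h2 : d₁ ∣ y := hd₁ ▸ Nat.gcd_dvd_right x y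
    rw [hx₁, hy₁]
    exact Nat.div_lt_div_of_lt_of_dvd h1 hxy
  have hx1 : x₁ ≤ 80 := by rw [hx₁]; exact (Nat.div_le_self _ _).trans hx80
  set S := (Finset.range (x₁ ^ d - y₁ ^ d + 1)).filter
        (fun p => p.Prime ∧ Odd p ∧ ¬ p ∣ x₁ * y₁ ∧ ellp x₁ y₁ p = d) with hS
  have hSp : ∀ p ∈ S, p.Prime ∧ p ∣ x₁ ^ d - y₁ ^ d ∧ d ∣ p - 1 := by
    intro p hp
    obtain ⟨_, h1, _, h3, h4⟩ := mem_filter.1 hp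
    exact ⟨h1, ellp_facts hlt.le h1 h3 hd0 h4⟩
  have hSk : ∀ p ∈ S, 1 ≤ (p - 1) / d ∧ (p - 1) / d * d + 1 = p := by
    intro p hp
    obtain ⟨h1, _, h3⟩ := hSp p hp
    have := h1.two_le
    refine ⟨Nat.div_pos (Nat.le_of_dvd (by omega) h3) hd0, ?_⟩
    rw [Nat.div_mul_cancel h3]; omega
  have hdp : ∀ p ∈ S, d ≤ p := by
    intro p hp
    obtain ⟨h1, h2⟩ := hSk p hp
    nlinarith
  have hinj : Set.InjOn (fun p => (p - 1) / d) (S : Set ℕ) := by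
    intro p hp q hq hpq
    simp only at hpq
    rw [← (hSk p hp).2, ← (hSk q hq).2, hpq]
  set P := S.image (fun p => (p - 1) / d) with hP
  have hPcard : P.card = S.card := card_image_of_injOn hinj
  have hprod : ∏ p ∈ S, p ∣ x₁ ^ d - y₁ ^ d :=
    Finset.prod_primes_dvd _ (fun p hp => (hSp p hp).1.prime) (fun p hp => (hSp p hp).2.1)
  have hpos : 0 < x₁ ^ d - y₁ ^ d := Nat.sub_pos_of_lt (Nat.pow_lt_pow_left hlt hd0.ne')
  have hcard : d ^ S.card ≤ 80 ^ d := by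
    calc d ^ S.card ≤ ∏ p ∈ S, p := Finset.pow_card_le_prod _ _ _ hdp
      _ ≤ x₁ ^ d - y₁ ^ d := Nat.le_of_dvd hpos hprod
      _ ≤ x₁ ^ d := Nat.sub_le _ _
      _ ≤ 80 ^ d := Nat.pow_le_pow_left hx1 d
  have hdR : (173 : ℝ) ≤ d := by exact_mod_cast hd173
  have hL : 0 < Real.log d := Real.log_pos (by linarith)
  have hcard' : (S.card : ℝ) / d ≤ Real.log 80 / Real.log d := by
    have h1 : ((d : ℝ) ^ S.card) ≤ (80 : ℝ) ^ d := by exact_mod_cast hcard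
    have h2 := Real.log_le_log (by positivity) h1
    rw [Real.log_pow, Real.log_pow] at h2
    rw [div_le_div_iff₀ (by linarith) hL]
    linarith
  have hab := abel d d (by omega) P (by
    intro k hk
    obtain ⟨p, hp, rfl⟩ := mem_image.1 hk
    refine ⟨(hSk p hp).1, ?_⟩
    rw [(hSk p hp).2]; exact (hSp p hp).1)
  rw [hPcard] at hab
  have hfin := final_num hd173
  have hsum : ∑ p ∈ S, 1 / ((p : ℝ) - 1) = (1 / d) * ∑ k ∈ P, (1 : ℝ) / k := by
    rw [hP, sum_image hinj, mul_sum]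
    refine sum_congr rfl fun p hp => ?_
    have h := (hSk p hp).2
    have h1 : ((((p - 1) / d : ℕ) : ℝ)) * d + 1 = p := by exact_mod_cast h
    rw [← h1, add_sub_cancel_right, mul_comm, one_div_mul_one_div]
  have hgt : ∀ p ∈ S, (0 : ℝ) < (p : ℝ) - 1 := by
    intro p hp
    have := hdp p hp
    have : (d : ℝ) ≤ p := by exact_mod_cast this
    linarith
  have hlog : Real.log (∏ p ∈ S, (1 + 1 / ((p : ℝ) - 1))) ≤ ∑ p ∈ S, 1 / ((p : ℝ) - 1) := by
    rw [Real.log_prod (fun p hp => by have := hgt p hp; positivity)]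
    apply sum_le_sum
    intro p hp
    have h0 := hgt p hp
    have := Real.log_le_sub_one_of_pos (x := 1 + 1 / ((p : ℝ) - 1)) (by positivity)
    linarith
  have hφ := Nat.totient_pos.2 hd0
  have hlt2 : ∑ k ∈ P, (1 : ℝ) / k < (d : ℝ) / Nat.totient d * (3.3 * Real.log (Real.log d)) := by
    linarith
  calc _ ≤ _ := hlog
    _ = _ := hsum
    _ < (1 / d) * ((d : ℝ) / Nat.totient d * (3.3 * Real.log (Real.log d))) := by gcongr
    _ = _ := by field_simp
end

section
/- Under the standing assumptions, assume further x ≤ 80, and let d > 1 be a divisor of m whose least prime divisor is at least 173. Then log ∏_{p} (1 + 1/(p − 1)) < 0.032, where the product (taken in the real numbers) runs over the odd primes p with p ∤ x₁·y₁ and ℓ_p = d. -/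
lemma ellp_two_mul_dvd (a b p d : ℕ) (hab : b < a) (hp : p.Prime) (hodd : Odd p)
    (hpab : ¬ p ∣ a * b) (hl : ellp a b p = d) (hd1 : 1 < d) (hd2 : Odd d) :
    2 * d ∣ p - 1 ∧ p ∣ a ^ d - b ^ d := by
  have : Fact p.Prime := ⟨hp⟩
  have hne : {ℓ : ℕ | 0 < ℓ ∧ p ∣ a ^ ℓ - b ^ ℓ}.Nonempty := by
    by_contra h
    rw [Set.not_nonempty_iff_eq_empty] at h
    unfold ellp at hl
    rw [h, Nat.sInf_empty] at hl
    omega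
  have hmem := Nat.sInf_mem hne
  have hmin : ∀ l, 0 < l → p ∣ a ^ l - b ^ l → d ≤ l := by
    intro l h1 h2
    rw [← hl]
    exact Nat.sInf_le ⟨h1, h2⟩
  change 0 < ellp a b p ∧ p ∣ a ^ (ellp a b p) - b ^ (ellp a b p) at hmem
  rw [hl] at hmem
  have ha0 : (a : ZMod p) ≠ 0 := by
    intro h
    rw [ZMod.natCast_eq_zero_iff] at h
    exact hpab (h.mul_right b)
  have hb0 : (b : ZMod p) ≠ 0 := by
    intro h
    rw [ZMod.natCast_eq_zero_iff] at h
    exact hpab (h.mul_left a)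
  have key : ∀ l, p ∣ a ^ l - b ^ l ↔ ((a : ZMod p) / b) ^ l = 1 := by
    intro l
    rw [← ZMod.natCast_eq_zero_iff, Nat.cast_sub (Nat.pow_le_pow_left hab.le l), div_pow,
      div_eq_one_iff_eq (pow_ne_zero _ hb0), sub_eq_zero]
    push_cast
    rfl
  have hu0 : (a : ZMod p) / b ≠ 0 := div_ne_zero ha0 hb0
  have h1 : orderOf ((a : ZMod p) / b) ∣ d := orderOf_dvd_of_pow_eq_one ((key d).1 hmem.2)
  have hpos : 0 < orderOf ((a : ZMod p) / b) := Nat.pos_of_dvd_of_pos h1 (by omega)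
  have h2 := hmin _ hpos ((key _).2 (pow_orderOf_eq_one _))
  have h3 : orderOf ((a : ZMod p) / b) = d := le_antisymm (Nat.le_of_dvd (by omega) h1) h2
  have h4 : d ∣ p - 1 := by
    rw [← h3]
    exact orderOf_dvd_of_pow_eq_one (ZMod.pow_card_sub_one_eq_one hu0)
  refine ⟨Nat.Coprime.mul_dvd_of_dvd_of_dvd (Nat.coprime_two_left.2 hd2) ?_ h4, hmem.2⟩
  obtain ⟨k, rfl⟩ := hodd
  exact ⟨k, by omega⟩

lemma sum_inv_le (T : Finset ℕ) (d : ℕ) (hd : 0 < d) (hT : ∀ j ∈ T, 0 < j) (hc : T.card ≤ d) :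
    ∑ j ∈ T, (1 : ℝ) / j ≤ 2 + Real.log d := by
  have hd' : (0 : ℝ) < d := by exact_mod_cast hd
  rw [← Finset.sum_filter_add_sum_filter_not T (fun j => j ≤ d)]
  have h1 : ∑ j ∈ T.filter (fun j => j ≤ d), (1 : ℝ) / j ≤ 1 + Real.log d := by
    refine le_trans ?_ (harmonic_le_one_add_log d)
    rw [harmonic_eq_sum_Icc]
    push_cast
    simp only [one_div]
    apply Finset.sum_le_sum_of_subset_of_nonneg
    · intro j hj
      rw [Finset.mem_filter] at hj
      exact Finset.mem_Icc.2 ⟨hT j hj.1, hj.2⟩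
    · intros
      positivity
  have h2 : ∑ j ∈ T.filter (fun j => ¬ j ≤ d), (1 : ℝ) / j ≤ 1 := by
    have h3 : ∑ j ∈ T.filter (fun j => ¬ j ≤ d), (1 : ℝ) / j
        ≤ (T.filter (fun j => ¬ j ≤ d)).card • ((1 : ℝ) / d) := by
      apply Finset.sum_le_card_nsmul
      intro j hj
      rw [Finset.mem_filter] at hj
      apply one_div_le_one_div_of_le hd'
      exact_mod_cast (not_le.1 hj.2).le
    refine h3.trans ?_
    rw [nsmul_eq_mul, mul_one_div, div_le_one hd']
    exact_mod_cast (Finset.card_filter_le _ _).trans hc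
  linarith

theorem log_prod_lt_of_minFac_ge_173 (x y z m n : ℕ) (hx : 0 < x) (hy : 0 < y) (hz : 0 < z)
    (hm : 0 < m) (hn : 0 < n) (hxy : y < x) (hzxy : z ≤ x - y)
    (hgcd : Nat.gcd m n = 1) (hmn : n < m)
    (heq : Nat.totient (z * ((x ^ m - y ^ m) / (x - y))) =
      z * ((x ^ n - y ^ n) / (x - y)))
    (hx80 : x ≤ 80)
    (d₁ x₁ y₁ : ℕ) (hd₁ : d₁ = Nat.gcd x y) (hx₁ : x₁ = x / d₁) (hy₁ : y₁ = y / d₁)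
    (d : ℕ) (hd : d ∣ m) (hd1 : 1 < d) (hd173 : 173 ≤ d.minFac) :
    Real.log (∏ p ∈ (Finset.range (x₁ ^ d - y₁ ^ d + 1)).filter
        (fun p => p.Prime ∧ Odd p ∧ ¬ p ∣ x₁ * y₁ ∧ ellp x₁ y₁ p = d),
      (1 + 1 / ((p : ℝ) - 1))) < 0.032 := by
  subst hd₁
  have hg : 0 < Nat.gcd x y := Nat.gcd_pos_of_pos_left _ hx
  have hlt : y₁ < x₁ := by
    rw [hx₁, hy₁]
    exact Nat.div_lt_div_of_lt_of_dvd (Nat.gcd_dvd_left x y) hxy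
  have hx1 : x₁ ≤ 80 := by
    rw [hx₁]
    exact (Nat.div_le_self _ _).trans hx80
  have hd2 : Odd d := by
    rw [← Nat.not_even_iff_odd]
    intro h
    have := Nat.minFac_le_of_dvd (le_refl 2) h.two_dvd
    omega
  have hdge : 173 ≤ d := hd173.trans (Nat.minFac_le (by omega))
  set S := (Finset.range (x₁ ^ d - y₁ ^ d + 1)).filter
        (fun p => p.Prime ∧ Odd p ∧ ¬ p ∣ x₁ * y₁ ∧ ellp x₁ y₁ p = d) with hS
  have hprop : ∀ p ∈ S, p.Prime ∧ 2 * d ∣ p - 1 ∧ p ∣ x₁ ^ d - y₁ ^ d := by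
    intro p hp
    rw [hS, Finset.mem_filter] at hp
    obtain ⟨-, h1, h2, h3, h4⟩ := hp
    exact ⟨h1, ellp_two_mul_dvd _ _ _ _ hlt h1 h2 h3 h4 hd1 hd2⟩
  clear_value S
  have hpos : 0 < x₁ ^ d - y₁ ^ d := Nat.sub_pos_of_lt (Nat.pow_lt_pow_left hlt (by omega))
  have hbig : ∀ p ∈ S, 81 ≤ p := by
    intro p hp
    obtain ⟨h1, h2, -⟩ := hprop p hp
    have := h1.two_le
    have := Nat.le_of_dvd (by omega) h2
    omega
  have hcard : S.card ≤ d := by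
    have h1 : ∏ p ∈ S, p ∣ x₁ ^ d - y₁ ^ d :=
      Finset.prod_primes_dvd _ (fun p hp => (hprop p hp).1.prime) (fun p hp => (hprop p hp).2.2)
    have h2 : 81 ^ S.card ≤ ∏ p ∈ S, p := by
      rw [← Finset.prod_const]
      exact Finset.prod_le_prod' hbig
    have h3 : 81 ^ S.card ≤ 81 ^ d := calc
      81 ^ S.card ≤ x₁ ^ d - y₁ ^ d := h2.trans (Nat.le_of_dvd hpos h1)
      _ ≤ x₁ ^ d := Nat.sub_le _ _
      _ ≤ 81 ^ d := Nat.pow_le_pow_left (by omega) d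
    exact (Nat.pow_le_pow_iff_right (by norm_num)).1 h3
  have hdR : (173 : ℝ) ≤ d := by exact_mod_cast hdge
  have hrep : ∀ p ∈ S, p = 2 * d * ((p - 1) / (2 * d)) + 1 := by
    intro p hp
    rw [Nat.mul_div_cancel' (hprop p hp).2.1]
    have := hbig p hp
    omega
  have hinj : Set.InjOn (fun p => (p - 1) / (2 * d)) (S : Set ℕ) := by
    intro p hp q hq h
    rw [hrep p hp, hrep q hq]
    simp only at h
    rw [h]
  have hsum := sum_inv_le (S.image (fun p => (p - 1) / (2 * d))) d (by omega) (by
    intro j hj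
    rw [Finset.mem_image] at hj
    obtain ⟨p, hp, rfl⟩ := hj
    apply Nat.pos_of_ne_zero
    intro h
    have h1 := hrep p hp
    rw [h] at h1
    have := hbig p hp
    omega) (Finset.card_image_le.trans hcard)
  rw [Finset.sum_image hinj] at hsum
  have hp1 : ∀ p ∈ S, (0 : ℝ) < (p : ℝ) - 1 := by
    intro p hp
    have : (81 : ℝ) ≤ p := by exact_mod_cast hbig p hp
    linarith
  have hlog : Real.log (∏ p ∈ S, (1 + 1 / ((p : ℝ) - 1)))
      ≤ (∑ p ∈ S, (1 : ℝ) / ((p - 1) / (2 * d) : ℕ)) / (2 * d) := by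
    rw [Real.log_prod (fun p hp => by have := hp1 p hp; positivity), Finset.sum_div]
    apply Finset.sum_le_sum
    intro p hp
    have h0 := hp1 p hp
    have h1 := Real.log_le_sub_one_of_pos (x := 1 + 1 / ((p : ℝ) - 1)) (by positivity)
    have h2 : (p : ℝ) - 1 = 2 * d * ((p - 1) / (2 * d) : ℕ) := by
      have : (p : ℝ) = ((2 * d * ((p - 1) / (2 * d)) + 1 : ℕ) : ℝ) := by
        exact_mod_cast hrep p hp
      rw [Nat.cast_add, Nat.cast_mul, Nat.cast_mul] at this
      push_cast at this ⊢
      linarith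
    refine h1.trans (le_of_eq ?_)
    rw [h2, div_div, mul_comm (2 * (d : ℝ))]
    ring
  have hlogd : Real.log d ≤ 8 * Real.log 2 + d / 256 - 1 := by
    have h1 := Real.log_le_sub_one_of_pos (x := (d : ℝ) / 256) (by positivity)
    rw [Real.log_div (by positivity) (by norm_num)] at h1
    have h2 : Real.log 256 = 8 * Real.log 2 := by
      rw [show (256 : ℝ) = 2 ^ 8 by norm_num, Real.log_pow]
      norm_num
    linarith
  have hl2 := Real.log_two_lt_d9
  refine hlog.trans_lt ?_
  rw [div_lt_iff₀ (by positivity)]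
  linarith
end

section
/- Under the standing assumptions, assume further x ≤ 80. If q is a prime divisor of m with q < 173, then q^6 does not divide x₁^(q−1) − y₁^(q−1). -/
/-- The odd primes below 173. -/
def oddPrimes : List ℕ :=
  [3, 5, 7, 11, 13, 17, 19, 23, 29, 31, 37, 41, 43, 47, 53, 59, 61, 67, 71, 73, 79, 83, 89, 97,
   101, 103, 107, 109, 113, 127, 131, 137, 139, 149, 151, 157, 163, 167]

theorem mem_oddPrimes (q : ℕ) (hq : q.Prime) (h : q < 173) (h2 : q ≠ 2) : q ∈ oddPrimes := by
  unfold oddPrimes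
  interval_cases q <;> first | decide | omega | (exfalso; revert hq; norm_num)

/-- `checkB e N a b`: no `c < b` coprime to `a` has `N ∣ a ^ e - c ^ e`, except `c = 0`. -/
def checkB (e N a : ℕ) (b : ℕ) : Bool :=
  Nat.rec true (fun b ih => cond (Nat.beq (Nat.mod (Nat.sub (Nat.pow a e) (Nat.pow b e)) N) 0)
    (cond (Nat.beq (Nat.gcd a b) 1) (cond (Nat.beq b 0) ih false) ih) ih) b

/-- `checkA e N a`: `checkB e N a' a'` for all `a' < a`. -/
def checkA (e N : ℕ) (a : ℕ) : Bool :=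
  Nat.rec true (fun a ih => cond (checkB e N a a) ih false) a

theorem checkB_succ (e N a b : ℕ) : checkB e N a (b + 1) =
    cond (Nat.beq (Nat.mod (Nat.sub (Nat.pow a e) (Nat.pow b e)) N) 0)
    (cond (Nat.beq (Nat.gcd a b) 1) (cond (Nat.beq b 0) (checkB e N a b) false) (checkB e N a b))
    (checkB e N a b) := rfl

theorem checkA_succ (e N a : ℕ) : checkA e N (a + 1) =
    cond (checkB e N a a) (checkA e N a) false := rfl

theorem checkB_spec (e N a b : ℕ) (h : checkB e N a b = true) (c : ℕ) (hc : c < b) (hc0 : 0 < c)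
    (hg : Nat.gcd a c = 1) : (a ^ e - c ^ e) % N ≠ 0 := by
  induction b with
  | zero => omega
  | succ b ih =>
    rw [checkB_succ] at h
    by_cases hcb : c = b
    · subst hcb
      intro hmod
      have h1 : Nat.beq (Nat.mod (Nat.sub (Nat.pow a e) (Nat.pow c e)) N) 0 = true :=
        Nat.beq_eq.mpr hmod
      have h2 : Nat.beq (Nat.gcd a c) 1 = true := Nat.beq_eq.mpr hg
      have h3 : Nat.beq c 0 = false := by
        cases c with
        | zero => omega
        | succ c => rfl
      rw [h1, h2, h3] at h
      simp at h
    · refine ih ?_ (by omega)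
      revert h
      generalize checkB e N a b = u
      cases u
      · cases Nat.beq (Nat.mod (Nat.sub (Nat.pow a e) (Nat.pow b e)) N) 0 <;>
          cases Nat.beq (Nat.gcd a b) 1 <;> cases Nat.beq b 0 <;> simp
      · simp

theorem checkA_spec (e N a : ℕ) (h : checkA e N a = true) (c : ℕ) (hc : c < a) :
    checkB e N c c = true := by
  induction a with
  | zero => omega
  | succ a ih =>
    rw [checkA_succ] at h
    cases hB : checkB e N a a
    · rw [hB] at h; simp at h
    · rw [hB] at h
      by_cases hca : c = a
      · subst hca; exact hB
      · exact ih h (by omega)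

set_option maxRecDepth 100000 in
theorem check_all : ∀ q ∈ oddPrimes, checkA (q - 1) (q ^ 6) 81 = true := by
  decide +kernel

/-- Finite check for odd primes. -/
theorem finite_check (q : ℕ) (hq : q ∈ oddPrimes) (a : ℕ) (ha : a < 81) (b : ℕ) (hb : b < a)
    (hb0 : 0 < b) (hg : Nat.gcd a b = 1) : (a ^ (q - 1) - b ^ (q - 1)) % q ^ 6 ≠ 0 :=
  checkB_spec _ _ a a (checkA_spec _ _ 81 (check_all q hq) a ha) b hb hb0 hg

/-- The parity argument, for `q = 2`. -/
theorem parity_case (x y z m n : ℕ) (hz : 0 < z) (hxy : y < x) (hxo : Odd x) (hyo : Odd y)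
    (h4 : 4 ∣ x - y) (hm : 2 ∣ m) (hn : Odd n)
    (heq : Nat.totient (z * ((x ^ m - y ^ m) / (x - y))) =
      z * ((x ^ n - y ^ n) / (x - y))) : False := by
  have hpos : 0 < x - y := by omega
  -- B is odd
  have hB : Odd ((x ^ n - y ^ n) / (x - y)) := by
    have hg : (x ^ n - y ^ n) / (x - y) = ∑ i ∈ Finset.range n, x ^ i * y ^ (n - 1 - i) := by
      refine Nat.div_eq_of_eq_mul_left hpos ?_
      have hle : y ^ n ≤ x ^ n := Nat.pow_le_pow_left hxy.le n
      zify [hle, hxy.le]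
      exact (geom_sum₂_mul (x : ℤ) (y : ℤ) n).symm
    rw [hg]
    rw [Finset.odd_sum_iff_odd_card_odd]
    rw [Finset.filter_true_of_mem (fun i _ => (hxo.pow).mul hyo.pow)]
    simpa using hn
  -- x + y divides A
  have hA : x + y ∣ (x ^ m - y ^ m) / (x - y) := by
    obtain ⟨k, rfl⟩ := hm
    have h1 : x ^ 2 - y ^ 2 ∣ x ^ (2 * k) - y ^ (2 * k) := by
      rw [pow_mul, pow_mul]; exact Nat.sub_dvd_pow_sub_pow _ _ _
    rw [Nat.sq_sub_sq] at h1
    obtain ⟨c, hc⟩ := h1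
    refine ⟨c, Nat.div_eq_of_eq_mul_right hpos ?_⟩
    rw [hc]; ring
  set A := (x ^ m - y ^ m) / (x - y)
  set B := (x ^ n - y ^ n) / (x - y)
  obtain ⟨k, w, hw, hzw⟩ := Nat.exists_eq_two_pow_mul_odd hz.ne'
  obtain ⟨s, hs⟩ := hyo
  obtain ⟨t, ht⟩ := h4
  have hsum : x + y = 2 * (2 * s + 2 * t + 1) := by omega
  obtain ⟨p, hp, hpd⟩ := Nat.exists_prime_and_dvd (n := 2 * s + 2 * t + 1) (by omega)
  have hp2 : p ≠ 2 := by
    rintro rfl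
    omega
  have hodd : Odd p := hp.odd_of_ne_two hp2
  have hd : 2 ^ (k + 1) * p ∣ z * A := by
    have h1 : 2 * p ∣ A := (hsum ▸ Nat.mul_dvd_mul_left 2 hpd : 2 * p ∣ x + y).trans hA
    have h2 : 2 ^ k ∣ z := ⟨w, hzw⟩
    have := Nat.mul_dvd_mul h2 h1
    rwa [← mul_assoc, ← pow_succ] at this
  have ht := Nat.totient_dvd_of_dvd hd
  rw [heq, Nat.totient_mul ((Nat.coprime_two_left.2 hodd).pow_left _),
    Nat.totient_prime_pow_succ Nat.prime_two, Nat.totient_prime hp] at ht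
  have he : 2 ∣ p - 1 := by obtain ⟨r, hr⟩ := hodd; omega
  have h3 : 2 ^ k * 2 ∣ z * B := by
    refine (Nat.mul_dvd_mul_left _ he).trans ?_
    simpa using ht
  rw [hzw, mul_assoc] at h3
  have h4 := Nat.dvd_of_mul_dvd_mul_left (by positivity) h3
  have := hw.mul hB
  rw [← Nat.not_even_iff_odd] at this
  exact this (even_iff_two_dvd.2 h4)


theorem pow_six_not_dvd (x y z m n : ℕ) (hx : 0 < x) (hy : 0 < y) (hz : 0 < z)
    (hm : 0 < m) (hn : 0 < n) (hxy : y < x) (hzxy : z ≤ x - y)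
    (hgcd : Nat.gcd m n = 1) (hmn : n < m)
    (heq : Nat.totient (z * ((x ^ m - y ^ m) / (x - y))) =
      z * ((x ^ n - y ^ n) / (x - y)))
    (hx80 : x ≤ 80)
    (d₁ x₁ y₁ : ℕ) (hd₁ : d₁ = Nat.gcd x y) (hx₁ : x₁ = x / d₁) (hy₁ : y₁ = y / d₁)
    (q : ℕ) (hq : q.Prime) (hqm : q ∣ m) (hq173 : q < 173) :
    ¬ q ^ 6 ∣ x₁ ^ (q - 1) - y₁ ^ (q - 1) := by
  intro hdiv
  have hdpos : 0 < d₁ := hd₁ ▸ Nat.gcd_pos_of_pos_left _ hx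
  have hxe : x = d₁ * x₁ := by
    rw [hx₁, Nat.mul_div_cancel' (hd₁ ▸ Nat.gcd_dvd_left x y)]
  have hye : y = d₁ * y₁ := by
    rw [hy₁, Nat.mul_div_cancel' (hd₁ ▸ Nat.gcd_dvd_right x y)]
  have hcop : Nat.gcd x₁ y₁ = 1 := by
    rw [hx₁, hy₁, hd₁]
    exact Nat.coprime_div_gcd_div_gcd (hd₁ ▸ hdpos)
  have hy0 : 0 < y₁ := by
    rcases Nat.eq_zero_or_pos y₁ with h | h
    · rw [h] at hye; omega
    · exact h
  have hlt : y₁ < x₁ := by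
    rw [hxe, hye] at hxy
    exact lt_of_mul_lt_mul_left hxy (Nat.zero_le _)
  have hle : x₁ ≤ 80 := by
    rw [hx₁]; exact (Nat.div_le_self _ _).trans hx80
  by_cases h2 : q = 2
  · subst h2
    norm_num at hdiv
    have h64 : 64 ≤ x₁ - y₁ := Nat.le_of_dvd (by omega) hdiv
    have hd1 : d₁ = 1 := by
      by_contra hne
      have : 2 ≤ d₁ := by omega
      have := Nat.mul_le_mul_right x₁ this
      omega
    rw [hd1, one_mul] at hxe hye
    subst hxe hye
    have hyo : Odd y := by
      rw [← Nat.not_even_iff_odd, even_iff_two_dvd]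
      intro h
      have hx2 : 2 ∣ x := by omega
      have := Nat.dvd_gcd hx2 h
      rw [hcop] at this
      omega
    have hxo : Odd x := by
      obtain ⟨r, hr⟩ := hyo
      rw [Nat.odd_iff]; omega
    refine parity_case x y z m n hz hxy hxo hyo (by omega) hqm ?_ heq
    rw [← Nat.not_even_iff_odd, even_iff_two_dvd]
    intro h
    have := Nat.dvd_gcd hqm h
    rw [hgcd] at this
    omega
  · exact finite_check q (mem_oddPrimes q hq hq173 h2) x₁ (by omega) y₁ hlt hy0 hcop
      (Nat.mod_eq_zero_of_dvd hdiv)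
end

section
/- Under the standing assumptions, assume further x ≤ 80. Then every prime divisor of m is at least 173; in particular the least prime divisor p(m) of m satisfies p(m) ≥ 173. -/
namespace TotEq

/-- The homogeneous geometric sum `(X^m - Y^m)/(X - Y)`. -/
def U (X Y m : ℕ) : ℕ := ∑ i ∈ Finset.range m, X ^ i * Y ^ (m - 1 - i)

lemma U_mul {X Y : ℕ} (h : Y ≤ X) (m : ℕ) : U X Y m * (X - Y) = X ^ m - Y ^ m := by
  unfold U
  exact geom_sum₂_mul_of_ge h m

lemma dvd_iff {P X Y : ℕ} [Fact P.Prime] (h : Y ≤ X) (hY : ¬ P ∣ Y) (a : ℕ) :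
    P ∣ X ^ a - Y ^ a ↔ ((X : ZMod P) / (Y : ZMod P)) ^ a = 1 := by
  have hY' : (Y : ZMod P) ≠ 0 := by rwa [Ne, ZMod.natCast_eq_zero_iff]
  rw [div_pow, div_eq_one_iff_eq (pow_ne_zero _ hY'), ← ZMod.natCast_eq_zero_iff,
    Nat.cast_sub (Nat.pow_le_pow_left h a), sub_eq_zero]
  push_cast
  rfl

lemma not_dvd_right {P X Y a : ℕ} (hP : P.Prime) (hc : X.Coprime Y) (h : Y ≤ X)
    (ha : P ∣ X ^ a - Y ^ a) (ha0 : a ≠ 0) : ¬ P ∣ Y := by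
  intro hY
  have h1 : P ∣ Y ^ a := dvd_pow hY ha0
  have h2 : P ∣ X ^ a := by
    have := (Nat.dvd_add_right h1).2 ha
    rwa [Nat.add_sub_cancel' (Nat.pow_le_pow_left h a)] at this
  have h3 := hP.dvd_of_dvd_pow h2
  exact hP.one_lt.ne' (Nat.dvd_one.1 (hc ▸ Nat.dvd_gcd h3 hY))

lemma not_dvd_left {P X Y a : ℕ} (hP : P.Prime) (hc : X.Coprime Y) (h : Y ≤ X)
    (ha : P ∣ X ^ a - Y ^ a) (ha0 : a ≠ 0) : ¬ P ∣ X := by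
  intro hX
  have h1 : P ∣ X ^ a := dvd_pow hX ha0
  have h2 : P ∣ Y ^ a := by
    have := (Nat.dvd_sub h1 ha)
    rwa [Nat.sub_sub_self (Nat.pow_le_pow_left h a)] at this
  have h3 := hP.dvd_of_dvd_pow h2
  exact hP.one_lt.ne' (Nat.dvd_one.1 (hc ▸ Nat.dvd_gcd hX h3))

lemma dvd_gcd {P X Y a b : ℕ} (hP : P.Prime) (h : Y ≤ X) (hY : ¬ P ∣ Y)
    (ha : P ∣ X ^ a - Y ^ a) (hb : P ∣ X ^ b - Y ^ b) :
    P ∣ X ^ (Nat.gcd a b) - Y ^ (Nat.gcd a b) := by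
  have := Fact.mk hP
  rw [dvd_iff h hY] at *
  exact pow_gcd_eq_one.2 ⟨ha, hb⟩

lemma fermat {P X Y : ℕ} (hP : P.Prime) (h : Y ≤ X) (hY : ¬ P ∣ Y) (hX : ¬ P ∣ X) :
    P ∣ X ^ (P - 1) - Y ^ (P - 1) := by
  have := Fact.mk hP
  rw [dvd_iff h hY]
  apply ZMod.pow_card_sub_one_eq_one
  apply div_ne_zero <;> rwa [Ne, ZMod.natCast_eq_zero_iff]

lemma pow_dvd {X Y a b : ℕ} (hab : a ∣ b) : X ^ a - Y ^ a ∣ X ^ b - Y ^ b := by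
  obtain ⟨c, rfl⟩ := hab
  rw [pow_mul, pow_mul]
  exact Nat.sub_dvd_pow_sub_pow _ _ _

lemma dvd_pred {P X Y q k : ℕ} (hP : P.Prime) (hq : q.Prime) (hk : k ≠ 0) (hc : X.Coprime Y)
    (h : Y ≤ X) (h1 : P ∣ X ^ (q * k) - Y ^ (q * k)) (h2 : ¬ P ∣ X ^ k - Y ^ k) : q ∣ P - 1 := by
  by_contra hn
  have hqk : q * k ≠ 0 := mul_ne_zero hq.ne_zero hk
  have hY := not_dvd_right hP hc h h1 hqk
  have hX := not_dvd_left hP hc h h1 hqk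
  have := dvd_gcd hP h hY h1 (fermat hP h hY hX)
  apply h2
  refine this.trans (pow_dvd ?_)
  have hco : Nat.Coprime (Nat.gcd (q * k) (P - 1)) q :=
    Nat.Coprime.coprime_dvd_left (Nat.gcd_dvd_right _ _) (((Nat.Prime.coprime_iff_not_dvd hq).2 hn).symm)
  exact hco.dvd_of_dvd_mul_left (Nat.gcd_dvd_left _ _)

/-- If `P ∣ A - B` then `U A B m ≡ m * B^(m-1)`. -/
lemma dvd_of_dvd_sub {P A B m : ℕ} (hP : P.Prime) (h : B ≤ A) (hB : ¬ P ∣ B)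
    (h1 : P ∣ A - B) (h2 : P ∣ U A B m) : P ∣ m := by
  have := Fact.mk hP
  have hAB : (A : ZMod P) = B := by
    rw [← ZMod.natCast_eq_zero_iff, Nat.cast_sub h, sub_eq_zero] at h1
    exact h1
  rw [← ZMod.natCast_eq_zero_iff] at h2 ⊢
  have hB' : (B : ZMod P) ≠ 0 := by rwa [Ne, ZMod.natCast_eq_zero_iff]
  have h3 : ((U A B m : ℕ) : ZMod P) = m * (B : ZMod P) ^ (m - 1) := by
    unfold U
    push_cast
    rw [hAB, Finset.sum_congr rfl (g := fun _ => (B : ZMod P) ^ (m - 1))]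
    · simp
    · intro i hi
      rw [← pow_add]
      congr 1
      have := Finset.mem_range.1 hi
      omega
  rw [h3] at h2
  rcases mul_eq_zero.1 h2 with h | h
  · exact h
  · exact absurd h (pow_ne_zero _ hB')

lemma dvd_diff_of_dvd_U {P A B m : ℕ} (h : B ≤ A) (h2 : P ∣ U A B m) : P ∣ A ^ m - B ^ m := by
  rw [← U_mul h]; exact h2.mul_right _

lemma U_pos {X Y m : ℕ} (_hX : 0 < X) (hm : m ≠ 0) : X ^ (m - 1) ≤ U X Y m := by
  unfold U
  have := Finset.single_le_sum (f := fun i => X ^ i * Y ^ (m - 1 - i)) (s := Finset.range m)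
    (fun i _ => Nat.zero_le _) (Finset.mem_range.2 (show m - 1 < m by omega))
  simpa using this

lemma U_le {X Y m : ℕ} (h : Y ≤ X) : U X Y m ≤ m * X ^ (m - 1) := by
  unfold U
  calc _ ≤ ∑ i ∈ Finset.range m, X ^ (m - 1) := by
        apply Finset.sum_le_sum
        intro i hi
        have := Finset.mem_range.1 hi
        calc X ^ i * Y ^ (m - 1 - i) ≤ X ^ i * X ^ (m - 1 - i) :=
              Nat.mul_le_mul_left _ (Nat.pow_le_pow_left h _)
          _ = _ := by rw [← pow_add]; congr 1; omega
    _ = _ := by simp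

/-- an odd prime divides `U A B r` (`r` that prime) at most once -/
lemma sq_not_dvd {r A B : ℕ} (hr : r.Prime) (hr2 : Odd r) (hc : A.Coprime B) (h : B < A) :
    ¬ r ^ 2 ∣ U A B r := by
  intro h2
  have := Fact.mk hr
  have h1 : r ∣ U A B r := (dvd_pow_self r two_ne_zero).trans h2
  have hd := dvd_diff_of_dvd_U h.le h1
  have hA := not_dvd_left hr hc h.le hd hr.ne_zero
  have hAB : r ∣ A - B := by
    rw [← ZMod.natCast_eq_zero_iff, Nat.cast_sub (Nat.pow_le_pow_left h.le _)] at hd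
    rw [← ZMod.natCast_eq_zero_iff, Nat.cast_sub h.le]
    push_cast at hd
    rwa [ZMod.pow_card, ZMod.pow_card] at hd
  have hlte := padicValNat.pow_sub_pow hr2 h hAB hA hr.ne_zero
  have hU0 : U A B r ≠ 0 := by
    have := U_pos (X := A) (Y := B) (by omega) hr.ne_zero
    have : 0 < A ^ (r - 1) := Nat.pow_pos (by omega)
    omega
  rw [← U_mul h.le, padicValNat.mul hU0 (by omega), padicValNat_self] at hlte
  have := (padicValNat_dvd_iff_le hU0).1 h2
  omega

lemma U_ne_zero {X Y m : ℕ} (hX : 0 < X) (hm : m ≠ 0) : U X Y m ≠ 0 := by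
  have := U_pos (X := X) (Y := Y) hX hm
  have : 0 < X ^ (m - 1) := Nat.pow_pos hX
  omega

lemma exists_prime_q {q X Y : ℕ} (hq : q.Prime) (hq2 : Odd q) (hc : X.Coprime Y) (hY : 0 < Y)
    (h : Y < X) : ∃ P, P.Prime ∧ P ∣ X ^ q - Y ^ q ∧ ¬ P ∣ X - Y := by
  by_contra! hcon
  have hq3 : 3 ≤ q := by
    have := hq.two_le
    rcases hq2 with ⟨k, hk⟩; omega
  have hsub : ∀ P, P.Prime → P ∣ U X Y q → P = q := by
    intro P hP hPU
    have hd := dvd_diff_of_dvd_U h.le hPU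
    exact (Nat.prime_dvd_prime_iff_eq hP hq).1 (dvd_of_dvd_sub hP h.le (not_dvd_right hP hc h.le hd hq.ne_zero) (hcon P hP hd) hPU)
  have hU0 : U X Y q ≠ 0 := U_ne_zero (by omega) hq.ne_zero
  have hsf : Squarefree (U X Y q) := by
    rw [Nat.squarefree_iff_prime_squarefree]
    intro p hp hpp
    have := hsub p hp ((Dvd.intro _ rfl).trans hpp)
    subst this
    exact sq_not_dvd hp hq2 hc h (by rwa [sq])
  have hle : U X Y q ≤ q := by
    rw [← Nat.prod_primeFactors_of_squarefree hsf]
    calc _ ≤ ∏ p ∈ {q}, p := by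
          apply Finset.prod_le_prod_of_subset_of_one_le'
          · intro p hp
            simp [hsub p (Nat.prime_of_mem_primeFactors hp) (Nat.dvd_of_mem_primeFactors hp)]
          · intro i hi _; simp at hi; omega
      _ = q := by simp
  -- but `U ≥ 2^(q-1) + 2^(q-2) > q`
  have h1 : ∑ i ∈ Finset.range q, 2 ^ i ≤ U X Y q := by
    unfold U
    apply Finset.sum_le_sum
    intro i _
    calc 2 ^ i ≤ X ^ i := Nat.pow_le_pow_left (by omega) _
      _ ≤ _ := Nat.le_mul_of_pos_right _ (Nat.pow_pos hY)
  have h2 : q < ∑ i ∈ Finset.range q, 2 ^ i := by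
    rw [Nat.geomSum_eq (le_refl 2)]
    have : ∀ k, 3 ≤ k → k + 1 < 2 ^ k := by
      intro k hk
      induction k, hk using Nat.le_induction with
      | base => norm_num
      | succ k hk ih => rw [pow_succ]; omega
    have := this q hq3
    simp only [Nat.add_one_sub_one, Nat.div_one]; omega
  omega

lemma size_bound {q r X : ℕ} (hq : 3 ≤ q) (hqr : q + 2 ≤ r) (hX : 2 ≤ X) :
    q * r * (q * X ^ (q - 1)) < X ^ (r * (q - 1)) := by
  have e : X ^ (r * (q - 1)) = X ^ ((r - 1) * (q - 1)) * X ^ (q - 1) := by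
    rw [← pow_add]; congr 1
    obtain ⟨s, rfl⟩ : ∃ s, r = s + 1 := ⟨r - 1, by omega⟩
    simp; ring
  rw [e, ← mul_assoc]
  apply Nat.mul_lt_mul_of_pos_right _ (Nat.pow_pos (by omega))
  have h1 : ∀ k, 3 ≤ k → k + 1 ≤ 2 ^ (k - 1) := by
    intro k hk
    induction k, hk using Nat.le_induction with
    | base => norm_num
    | succ k hk ih =>
      have : k + 1 - 1 = (k - 1) + 1 := by omega
      rw [this, pow_succ]; omega
  have h2 : ∀ k, 4 ≤ k → k ≤ 4 ^ (k - 3) := by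
    intro k hk
    induction k, hk using Nat.le_induction with
    | base => norm_num
    | succ k hk ih =>
      have : k + 1 - 3 = (k - 3) + 1 := by omega
      rw [this, pow_succ]; omega
  calc q * r * q = q ^ 2 * r := by ring
    _ < (q + 1) ^ 2 * r := Nat.mul_lt_mul_of_pos_right (by nlinarith) (by omega)
    _ ≤ (q + 1) ^ 2 * 4 ^ (r - 3) := Nat.mul_le_mul_left _ (h2 r (by omega))
    _ ≤ (q + 1) ^ 2 * (q + 1) ^ (r - 3) :=
        Nat.mul_le_mul_left _ (Nat.pow_le_pow_left (by omega) _)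
    _ = (q + 1) ^ (r - 1) := by rw [← pow_add]; congr 1; omega
    _ ≤ (2 ^ (q - 1)) ^ (r - 1) := Nat.pow_le_pow_left (h1 q hq) _
    _ = 2 ^ ((r - 1) * (q - 1)) := by rw [← pow_mul, mul_comm]
    _ ≤ _ := Nat.pow_le_pow_left hX _

/-- Zsigmondy for the exponent `q * r`. -/
lemma exists_prime_qr {q r X Y : ℕ} (hq : q.Prime) (hq2 : Odd q) (hr : r.Prime) (hqr : q < r)
    (hc : X.Coprime Y) (hY : 0 < Y) (h : Y < X) :
    ∃ P, P.Prime ∧ P ∣ X ^ (q * r) - Y ^ (q * r) ∧ ¬ P ∣ X ^ q - Y ^ q ∧ ¬ P ∣ X ^ r - Y ^ r := by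
  by_contra! hcon
  have hq3 : 3 ≤ q := by
    have := hq.two_le
    rcases hq2 with ⟨k, hk⟩; omega
  have hr2 : Odd r := hr.odd_of_ne_two (by omega)
  have hqr2 : q + 2 ≤ r := by
    rcases hq2 with ⟨k, hk⟩; rcases hr2 with ⟨l, hl⟩; omega
  have hX : 0 < X := by omega
  have hsub : 0 < X - Y := by omega
  have hltq : Y ^ q < X ^ q := Nat.pow_lt_pow_left h hq.ne_zero
  have hltr : Y ^ r < X ^ r := Nat.pow_lt_pow_left h hr.ne_zero
  have hcq : (X ^ q).Coprime (Y ^ q) := Nat.Coprime.pow _ _ hc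
  have hcr : (X ^ r).Coprime (Y ^ r) := Nat.Coprime.pow _ _ hc
  have hT : U (X ^ q) (Y ^ q) r * U X Y q = U X Y (q * r) := by
    apply Nat.eq_of_mul_eq_mul_right hsub
    rw [mul_assoc, U_mul h.le, U_mul h.le, U_mul hltq.le, ← pow_mul, ← pow_mul]
  have hS : U (X ^ r) (Y ^ r) q * U X Y r = U X Y (q * r) := by
    apply Nat.eq_of_mul_eq_mul_right hsub
    rw [mul_assoc, U_mul h.le, U_mul h.le, U_mul hltr.le, ← pow_mul, ← pow_mul, mul_comm r q]
  have hcop : Nat.Coprime (U X Y q) (U X Y r) := by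
    rw [Nat.coprime_iff_gcd_eq_one]
    by_contra hne
    obtain ⟨P, hP, hPd⟩ := Nat.exists_prime_and_dvd hne
    have p1 := hPd.trans (Nat.gcd_dvd_left _ _)
    have p2 := hPd.trans (Nat.gcd_dvd_right _ _)
    have d1 := dvd_diff_of_dvd_U h.le p1
    have d2 := dvd_diff_of_dvd_U h.le p2
    have hYn := not_dvd_right hP hc h.le d1 hq.ne_zero
    have d3 := dvd_gcd hP h.le hYn d1 d2
    rw [(Nat.coprime_primes hq hr).2 hqr.ne, pow_one, pow_one] at d3
    have e1 := (Nat.prime_dvd_prime_iff_eq hP hq).1 (dvd_of_dvd_sub hP h.le hYn d3 p1)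
    have e2 := (Nat.prime_dvd_prime_iff_eq hP hr).1 (dvd_of_dvd_sub hP h.le hYn d3 p2)
    omega
  obtain ⟨W, hW⟩ : U X Y q ∣ U (X ^ r) (Y ^ r) q := by
    apply hcop.dvd_of_dvd_mul_right
    rw [hS, ← hT]; exact Dvd.intro_left _ rfl
  have hUq0 : U X Y q ≠ 0 := U_ne_zero hX hq.ne_zero
  have hWT : U (X ^ q) (Y ^ q) r = U X Y r * W := by
    apply Nat.eq_of_mul_eq_mul_right (Nat.pos_of_ne_zero hUq0)
    rw [hT, ← hS, hW]; ring
  have hS0 : U (X ^ r) (Y ^ r) q ≠ 0 := U_ne_zero (Nat.pow_pos hX) hq.ne_zero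
  have hWS : W ∣ U (X ^ r) (Y ^ r) q := hW ▸ Dvd.intro_left _ rfl
  have hWT' : W ∣ U (X ^ q) (Y ^ q) r := hWT ▸ Dvd.intro_left _ rfl
  have hprimes : ∀ P, P.Prime → P ∣ W → P = q ∨ P = r := by
    intro P hP hPW
    have d0 : P ∣ X ^ (q * r) - Y ^ (q * r) := by
      have := dvd_diff_of_dvd_U hltq.le (hPW.trans hWT')
      rwa [← pow_mul, ← pow_mul] at this
    have hYn := not_dvd_right hP hc h.le d0 (mul_ne_zero hq.ne_zero hr.ne_zero)
    by_cases hPq : P ∣ X ^ q - Y ^ q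
    · right
      exact (Nat.prime_dvd_prime_iff_eq hP hr).1 (dvd_of_dvd_sub hP hltq.le
        (fun hh => hYn (hP.dvd_of_dvd_pow hh)) hPq (hPW.trans hWT'))
    · left
      exact (Nat.prime_dvd_prime_iff_eq hP hq).1 (dvd_of_dvd_sub hP hltr.le
        (fun hh => hYn (hP.dvd_of_dvd_pow hh)) (hcon P hP d0 hPq) (hPW.trans hWS))
  have hsf : Squarefree W := by
    rw [Nat.squarefree_iff_prime_squarefree]
    intro p hp hpp
    rw [← sq] at hpp
    rcases hprimes p hp ((dvd_pow_self p two_ne_zero).trans hpp) with rfl | rfl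
    · exact sq_not_dvd hp hq2 hcr hltr (hpp.trans hWS)
    · exact sq_not_dvd hp hr2 hcq hltq (hpp.trans hWT')
  have hle : W ≤ q * r := by
    rw [← Nat.prod_primeFactors_of_squarefree hsf]
    calc _ ≤ ∏ p ∈ {q, r}, p := by
          apply Finset.prod_le_prod_of_subset_of_one_le'
          · intro p hp
            simpa using hprimes p (Nat.prime_of_mem_primeFactors hp) (Nat.dvd_of_mem_primeFactors hp)
          · intro i hi _
            simp at hi
            omega
      _ = q * r := by rw [Finset.prod_pair hqr.ne]
  have hlow : X ^ (r * (q - 1)) ≤ U (X ^ r) (Y ^ r) q := by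
    rw [pow_mul]; exact U_pos (Nat.pow_pos hX) hq.ne_zero
  have hup : U (X ^ r) (Y ^ r) q ≤ q * r * (q * X ^ (q - 1)) := by
    rw [hW, mul_comm]
    exact Nat.mul_le_mul hle (U_le h.le)
  have := size_bound (X := X) hq3 hqr2 (by omega)
  omega

/-- Bound for the valuation of `U X Y n`. -/
lemma val_zero {r X Y n : ℕ} (hr : r.Prime) (hc : X.Coprime Y) (h : Y < X) (hn : ¬ r ∣ n)
    (hd : r ∣ X - Y) : ¬ r ∣ U X Y n := by
  intro hU
  have hn0 : n ≠ 0 := by rintro rfl; simp at hn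
  exact hn (dvd_of_dvd_sub hr h.le (not_dvd_right hr hc h.le (dvd_diff_of_dvd_U h.le hU) hn0) hd hU)

lemma val_dvd {r X Y n k : ℕ} (hr : r.Prime) (hr2 : Odd r) (hc : X.Coprime Y) (h : Y < X)
    (hn : ¬ r ∣ n) (hk : r ^ k ∣ U X Y n) : r ^ k ∣ X ^ (r - 1) - Y ^ (r - 1) := by
  rcases Nat.eq_zero_or_pos k with rfl | hk0
  · simp
  have := Fact.mk hr
  have hn0 : n ≠ 0 := by rintro rfl; simp at hn
  have h1 : r ∣ X ^ n - Y ^ n :=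
    dvd_diff_of_dvd_U h.le ((dvd_pow_self r hk0.ne').trans hk)
  have hX := not_dvd_left hr hc h.le h1 hn0
  have hY := not_dvd_right hr hc h.le h1 hn0
  have hf := fermat hr h.le hY hX
  have hr1 : r - 1 ≠ 0 := by have := hr.two_le; omega
  have hlt : Y ^ (r - 1) < X ^ (r - 1) := Nat.pow_lt_pow_left h hr1
  have hlte := padicValNat.pow_sub_pow hr2 hlt hf (fun hh => hX (hr.dvd_of_dvd_pow hh)) hn0
  rw [padicValNat.eq_zero_of_not_dvd hn, add_zero] at hlte
  have h2 : r ^ k ∣ (X ^ (r - 1)) ^ n - (Y ^ (r - 1)) ^ n := by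
    rw [← pow_mul, ← pow_mul]
    exact (dvd_diff_of_dvd_U h.le hk).trans (pow_dvd (Dvd.intro_left _ rfl))
  have hlt2 : (Y ^ (r - 1)) ^ n < (X ^ (r - 1)) ^ n := Nat.pow_lt_pow_left hlt hn0
  rw [padicValNat_dvd_iff_le (by omega), hlte] at h2
  rwa [padicValNat_dvd_iff_le (by omega)]

end TotEq
namespace TotEq

/-- numerators (over 24) of the bound for `k / φ(k)` -/
def Fn (k : ℕ) : ℕ :=
  if k < 2 then 24 else if k < 6 then 48 else if k < 30 then 72 else if k < 210 then 90 else 105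

def cN (q : ℕ) : ℕ → ℕ
  | 0 => 1
  | t + 1 => cN q t * (2 * q * (t + 1) + 1)

def cD (q : ℕ) : ℕ → ℕ
  | 0 => 1
  | t + 1 => cD q t * (2 * q * (t + 1))

def hb (q : ℕ) : ℕ := if q < 5 then 11 else if q < 11 then 10 else 9

def q0 (q : ℕ) : ℕ := if q < 5 then 3 else if q < 11 then 5 else 11

def chk (X Y d q t : ℕ) : Bool :=
  Nat.blt (Fn (d * d * (X - Y)) * cN (q0 q) (t + 1) * hb q ^ t)
    (d * X * 24 * cD (q0 q) (t + 1) * 8 ^ t)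

/-- bounded quantifier in a form that the kernel evaluates quickly -/
noncomputable def ball (p : ℕ → Bool) (n : ℕ) : Bool :=
  Nat.rec true (fun k ih => Bool.rec false ih (p k)) n

lemma ball_spec {p : ℕ → Bool} {n : ℕ} (h : ball p n = true) : ∀ k < n, p k = true := by
  induction n with
  | zero => intro k hk; omega
  | succ n ih =>
    have e : ball p (n + 1) = Bool.rec false (ball p n) (p n) := rfl
    rw [e] at h
    intro k hk
    rcases hpn : p n with _ | _
    · rw [hpn] at h; exact (Bool.false_ne_true h).elim
    · rw [hpn] at h
      rcases Nat.lt_succ_iff_lt_or_eq.1 hk with h1 | h1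
      · exact ih h k h1
      · rw [h1, hpn]

/-- the check for a triple with `q ^ 2 ∣ D`, where `D = X ^ (q-1) - Y ^ (q-1)` -/
noncomputable def t1b (X Y q D : ℕ) : Bool :=
  !(Nat.beq (D % q ^ 6) 0) &&
  ball (n := 6) fun t => !(Nat.beq (D % q ^ t) 0) ||
    (ball (n := 80 / X + 1) fun d => Nat.beq d 0 || Nat.blt 80 (d * X) || chk X Y d q t)

noncomputable def t1a (X Y q D : ℕ) : Bool :=
  Bool.rec true (Nat.beq ((X - Y) % q) 0 || !(Nat.beq (Nat.gcd X Y) 1) || t1b X Y q D)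
    (Nat.beq (D % q ^ 2) 0)

noncomputable def t1 (q : ℕ) : Bool :=
  ball (n := 81) fun X => ball (n := X) fun Y =>
    Nat.beq Y 0 || t1a X Y q (X ^ (q - 1) - Y ^ (q - 1))

def oddPrimes : List ℕ :=
  [3, 5, 7, 11, 13, 17, 19, 23, 29, 31, 37, 41, 43, 47, 53, 59, 61, 67, 71, 73, 79, 83, 89, 97,
   101, 103, 107, 109, 113, 127, 131, 137, 139, 149, 151, 157, 163, 167]

lemma table1 : oddPrimes.all t1 = true := by decide +kernel

noncomputable def t2 : Bool :=
  ball (n := 81) fun X => ball (n := X) fun Y => Nat.beq Y 0 ||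
    (ball (n := 80 / X + 1) fun d => Nat.beq d 0 || Nat.blt 80 (d * X) ||
      ((Nat.ble X 3 || Nat.blt (Fn (d * d * (X - Y)) * 7) (d * X * 24 * 4)) &&
      chk X Y d 3 0 && (Nat.beq (X % 3) 0 || chk X Y d 3 1) &&
      chk X Y d 5 0 && chk X Y d 5 1 && chk X Y d 11 0 && chk X Y d 11 1))

lemma table2 : t2 = true := by decide +kernel

lemma mem_oddPrimes {q : ℕ} (hq : q.Prime) (h3 : q ≠ 2) (h : q < 173) : q ∈ oddPrimes := by
  have key : ∀ q < 173, q = 2 ∨ q ∈ oddPrimes ∨ q < 2 ∨ ∃ k ∈ [2, 3, 5, 7, 11, 13], k ∣ q ∧ k ≠ q := by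
    decide +kernel
  rcases key q h with h | h | h | ⟨k, hk, hkq, hne⟩
  · exact absurd h h3
  · exact h
  · have := hq.two_le; omega
  · rcases (Nat.dvd_prime hq).1 hkq with h1 | h1
    · subst h1; simp at hk
    · exact absurd h1 hne

lemma table1' {X Y q : ℕ} (hq : q.Prime) (hq2 : q ≠ 2) (hq173 : q < 173) (hX : X ≤ 80) (hY : 0 < Y)
    (h : Y < X) (hc : X.Coprime Y) (hd : ¬ q ∣ X - Y) (h2 : q ^ 2 ∣ X ^ (q - 1) - Y ^ (q - 1)) :
    ¬ q ^ 6 ∣ X ^ (q - 1) - Y ^ (q - 1) ∧ ∀ t < 6, q ^ t ∣ X ^ (q - 1) - Y ^ (q - 1) →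
      ∀ d, 0 < d → d * X ≤ 80 → chk X Y d q t = true := by
  have h1 := ball_spec (ball_spec (List.all_eq_true.1 table1 q (mem_oddPrimes hq hq2 hq173)) X
    (by omega)) Y h
  generalize hD : X ^ (q - 1) - Y ^ (q - 1) = D at *
  have e1 : Nat.beq Y 0 = false := by
    rw [Bool.eq_false_iff, Ne, Nat.beq_eq]; omega
  have e2 : Nat.beq (D % q ^ 2) 0 = true := by
    rw [Nat.beq_eq]; exact Nat.mod_eq_zero_of_dvd h2
  have e3 : Nat.beq ((X - Y) % q) 0 = false := by
    rw [Bool.eq_false_iff, Ne, Nat.beq_eq]; exact fun hh => hd (Nat.dvd_of_mod_eq_zero hh)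
  have e4 : Nat.beq (Nat.gcd X Y) 1 = true := by rw [Nat.beq_eq]; exact hc
  rw [e1, Bool.false_or] at h1
  unfold t1a at h1
  rw [e2, e3, e4] at h1
  simp only [Bool.not_true, Bool.false_or] at h1
  unfold t1b at h1
  rw [Bool.and_eq_true] at h1
  refine ⟨?_, ?_⟩
  · intro h6
    have := h1.1
    rw [Bool.not_eq_true', Bool.eq_false_iff, Ne, Nat.beq_eq] at this
    exact this (Nat.mod_eq_zero_of_dvd h6)
  · intro t ht htd d hd0 hdX
    have h3 := ball_spec h1.2 t ht
    have e5 : Nat.beq (D % q ^ t) 0 = true := by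
      rw [Nat.beq_eq]; exact Nat.mod_eq_zero_of_dvd htd
    rw [e5, Bool.not_true, Bool.false_or] at h3
    have h4 := ball_spec h3 d
      (Nat.lt_succ_of_le ((Nat.le_div_iff_mul_le (by omega)).2 hdX))
    have e6 : Nat.beq d 0 = false := by
      rw [Bool.eq_false_iff, Ne, Nat.beq_eq]; omega
    have e7 : Nat.blt 80 (d * X) = false := by
      rw [Bool.eq_false_iff, Ne, Nat.blt_eq]; omega
    rwa [e6, e7, Bool.false_or, Bool.false_or] at h4

lemma table2' {X Y d : ℕ} (hY : 0 < Y) (h : Y < X) (hd0 : 0 < d) (hdX : d * X ≤ 80) :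
    (4 ≤ X → Fn (d * d * (X - Y)) * 7 < d * X * 24 * 4) ∧
    chk X Y d 3 0 = true ∧ (¬ 3 ∣ X → chk X Y d 3 1 = true) ∧
      chk X Y d 5 0 = true ∧ chk X Y d 5 1 = true ∧ chk X Y d 11 0 = true ∧
      chk X Y d 11 1 = true := by
  have h1 := ball_spec (ball_spec table2 X
    (by nlinarith)) Y h
  have e1 : Nat.beq Y 0 = false := by
    rw [Bool.eq_false_iff, Ne, Nat.beq_eq]; omega
  rw [e1, Bool.false_or] at h1
  have h4 := ball_spec h1 d
      (Nat.lt_succ_of_le ((Nat.le_div_iff_mul_le (by omega)).2 hdX))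
  have e6 : Nat.beq d 0 = false := by
    rw [Bool.eq_false_iff, Ne, Nat.beq_eq]; omega
  have e7 : Nat.blt 80 (d * X) = false := by
    rw [Bool.eq_false_iff, Ne, Nat.blt_eq]; omega
  rw [e6, e7, Bool.false_or, Bool.false_or] at h4
  simp only [Bool.and_eq_true, Bool.or_eq_true, Nat.beq_eq, Nat.blt_eq, Nat.ble_eq] at h4
  obtain ⟨⟨⟨⟨⟨⟨a, b⟩, c⟩, e⟩, f⟩, g⟩, i⟩ := h4
  refine ⟨fun hX => ?_, b, fun h3 => ?_, e, f, g, i⟩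
  · rcases a with a | a
    · omega
    · exact a
  · rcases c with c | c
    · exact absurd (Nat.dvd_of_mod_eq_zero c) h3
    · exact c

end TotEq
namespace TotEq
open Finset

noncomputable def f (p : ℕ) : ℝ := (p : ℝ) / ((p : ℝ) - 1)

lemma one_le_f {p : ℕ} (hp : 2 ≤ p) : 1 ≤ f p := by
  unfold f
  have : (2 : ℝ) ≤ p := by exact_mod_cast hp
  rw [le_div_iff₀ (by linarith)]; linarith

lemma f_anti {a b : ℕ} (ha : 2 ≤ a) (hab : a ≤ b) : f b ≤ f a := by
  unfold f
  have h1 : (2 : ℝ) ≤ a := by exact_mod_cast ha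
  have h2 : (a : ℝ) ≤ b := by exact_mod_cast hab
  rw [div_le_div_iff₀ (by linarith) (by linarith)]
  nlinarith

lemma ratio {N : ℕ} : (N : ℝ) = (Nat.totient N : ℝ) * ∏ p ∈ N.primeFactors, f p := by
  have h := Nat.totient_mul_prod_primeFactors N
  have h' : (Nat.totient N : ℝ) * ∏ p ∈ N.primeFactors, (p : ℝ)
      = N * ∏ p ∈ N.primeFactors, ((p : ℝ) - 1) := by
    have := congrArg (fun k : ℕ => (k : ℝ)) h
    push_cast at this
    rw [this]
    congr 1
    apply prod_congr rfl
    intro p hp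
    rw [Nat.cast_sub (Nat.prime_of_mem_primeFactors hp).one_lt.le]; simp
  have h0 : ∏ p ∈ N.primeFactors, ((p : ℝ) - 1) ≠ 0 := by
    rw [prod_ne_zero_iff]
    intro p hp
    have : (2 : ℝ) ≤ p := by exact_mod_cast (Nat.prime_of_mem_primeFactors hp).two_le
    linarith
  unfold f
  rw [prod_div_distrib, ← mul_div_assoc, h', mul_div_assoc, div_self h0, mul_one]

/-- the primes of `N` that are `1` modulo `r` -/
def S (N r : ℕ) : Finset ℕ := N.primeFactors.filter (fun p => r ∣ p - 1)

lemma card_S {N r : ℕ} (hN : N ≠ 0) (hr : r.Prime) :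
    N.factorization r + (S N r).card ≤ (Nat.totient N).factorization r + 1 := by
  have h := congrArg (fun k : ℕ => k.factorization r) (Nat.totient_mul_prod_primeFactors N)
  have hp0 : ∀ p ∈ N.primeFactors, p ≠ 0 := fun p hp => (Nat.prime_of_mem_primeFactors hp).ne_zero
  have hp1 : ∀ p ∈ N.primeFactors, p - 1 ≠ 0 := fun p hp => by
    have := (Nat.prime_of_mem_primeFactors hp).two_le; omega
  have hphi : Nat.totient N ≠ 0 := (Nat.totient_pos.2 (Nat.pos_of_ne_zero hN)).ne'
  rw [Nat.factorization_mul hphi (prod_ne_zero_iff.2 hp0),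
    Nat.factorization_mul hN (prod_ne_zero_iff.2 hp1), Finsupp.add_apply, Finsupp.add_apply,
    Nat.factorization_prod_apply hp0, Nat.factorization_prod_apply hp1] at h
  have h1 : ∑ p ∈ N.primeFactors, p.factorization r ≤ 1 := by
    calc _ = ∑ p ∈ N.primeFactors, if p = r then 1 else 0 := by
          apply sum_congr rfl
          intro p hp
          rw [(Nat.prime_of_mem_primeFactors hp).factorization, Finsupp.single_apply]
      _ ≤ 1 := by
          rw [sum_ite_eq']; split_ifs <;> omega
  have h2 : (S N r).card ≤ ∑ p ∈ N.primeFactors, (p - 1).factorization r := by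
    unfold S
    rw [card_filter]
    apply sum_le_sum
    intro p hp
    split_ifs with hd
    · exact (hr.dvd_iff_one_le_factorization (hp1 p hp)).1 hd
    · omega
  omega

/-- comparison of a set with its densest version -/
lemma dense (e : ℕ → ℕ) (g : ℕ → ℝ) (s : Finset ℕ)
    (H : ∀ T ⊆ s, ∀ a ∈ T, (∀ b ∈ T, b ≤ a) → e (T.card - 1) ≤ a)
    (h0 : ∀ a ∈ s, 0 ≤ g a) (hg : ∀ i, ∀ a ∈ s, e i ≤ a → g a ≤ g (e i)) :
    ∏ a ∈ s, g a ≤ ∏ i ∈ range s.card, g (e i) ∧ ∏ i ∈ range s.card, e i ≤ ∏ a ∈ s, a := by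
  induction s using Finset.induction_on_max with
  | empty => simp
  | insert a s ha ih =>
    have has : a ∉ s := fun h => lt_irrefl _ (ha a h)
    have h1 := ih (fun T hT => H T (hT.trans (subset_insert _ _)))
      (fun b hb => h0 b (mem_insert_of_mem hb)) (fun i b hb => hg i b (mem_insert_of_mem hb))
    have h2 : e s.card ≤ a := by
      have := H (insert a s) (Subset.refl _) a (mem_insert_self _ _) (by
        intro b hb
        rcases mem_insert.1 hb with rfl | hb
        · exact le_refl _
        · exact (ha b hb).le)
      rwa [card_insert_of_notMem has, Nat.add_sub_cancel] at this
    rw [card_insert_of_notMem has, prod_insert has, prod_insert has, prod_range_succ,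
      prod_range_succ, mul_comm (g a), mul_comm a]
    have h3 := hg s.card a (mem_insert_self _ _) h2
    have h4 := h0 a (mem_insert_self _ _)
    refine ⟨?_, Nat.mul_le_mul h1.2 h2⟩
    apply mul_le_mul h1.1 h3 h4
    exact le_trans (prod_nonneg fun b hb => h0 b (mem_insert_of_mem hb)) h1.1

noncomputable def gb (r B : ℕ) : ℝ := ∏ i ∈ range B, f (2 * r * (i + 1) + 1)

lemma gb_term_ge {r i : ℕ} (hr : 0 < r) : 2 ≤ 2 * r * (i + 1) + 1 := by
  have : 0 < r * (i + 1) := by positivity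
  nlinarith

lemma gb_mono {r B B' : ℕ} (hr : 0 < r) (h : B ≤ B') : gb r B ≤ gb r B' := by
  unfold gb
  apply prod_le_prod_of_subset_of_one_le (range_subset_range.2 h)
  · intro i _; linarith [one_le_f (gb_term_ge (i := i) hr)]
  · intro i _ _; exact one_le_f (gb_term_ge hr)

lemma gb_anti {r r' B : ℕ} (hr : 0 < r) (h : r ≤ r') : gb r' B ≤ gb r B := by
  unfold gb
  apply prod_le_prod
  · intro i _; linarith [one_le_f (gb_term_ge (r := r') (i := i) (by omega))]
  · intro i _
    apply f_anti (gb_term_ge hr)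
    have := Nat.mul_le_mul_right (i + 1) h
    nlinarith

lemma gb_pos {r B : ℕ} (hr : 0 < r) : 0 < gb r B := by
  unfold gb
  apply prod_pos
  intro i _; linarith [one_le_f (gb_term_ge (i := i) hr)]

lemma S_prod {N r B : ℕ} (hr : r.Prime) (hr2 : Odd r) (hB : (S N r).card ≤ B) :
    ∏ p ∈ S N r, f p ≤ gb r B := by
  refine le_trans ?_ (gb_mono hr.pos hB)
  have h2 : ∀ a ∈ S N r, 2 ≤ a := fun a ha =>
    (Nat.prime_of_mem_primeFactors (mem_filter.1 ha).1).two_le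
  have hform : ∀ a ∈ S N r, ∃ i, a = 2 * r * (i + 1) + 1 := by
    intro a ha
    obtain ⟨hap, hd⟩ := mem_filter.1 ha
    have hp := Nat.prime_of_mem_primeFactors hap
    have h3 : 3 ≤ r := by
      have := hr.two_le
      rcases hr2 with ⟨k, hk⟩; omega
    have hle := Nat.le_of_dvd (by have := hp.two_le; omega) hd
    have hodd : Odd a := hp.odd_of_ne_two (by omega)
    have h2d : 2 ∣ a - 1 := by rcases hodd with ⟨k, hk⟩; omega
    have hc : Nat.Coprime 2 r := (Nat.coprime_two_left).2 hr2
    obtain ⟨k, hk⟩ := hc.mul_dvd_of_dvd_of_dvd h2d hd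
    have hk0 : k ≠ 0 := by rintro rfl; simp at hk; omega
    exact ⟨k - 1, by rw [Nat.sub_add_cancel (by omega)]; omega⟩
  refine (dense (fun i => 2 * r * (i + 1) + 1) f (S N r) ?_ ?_ ?_).1
  · intro T hT a haT hmax
    obtain ⟨j, hj⟩ := hform a (hT haT)
    have hsub : T ⊆ (range (j + 1)).image (fun i => 2 * r * (i + 1) + 1) := by
      intro b hb
      obtain ⟨i, hi⟩ := hform b (hT hb)
      rw [mem_image]
      refine ⟨i, ?_, hi.symm⟩
      have := hmax b hb
      rw [hi, hj] at this
      have h4 : 2 * r * (i + 1) ≤ 2 * r * (j + 1) := by omega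
      have := Nat.le_of_mul_le_mul_left h4 (by have := hr.pos; omega)
      rw [mem_range]; omega
    have hcard := (card_le_card hsub).trans card_image_le
    rw [card_range] at hcard
    have : T.card - 1 ≤ j := by omega
    rw [hj]
    have := Nat.mul_le_mul_left (2 * r) (Nat.add_le_add_right this 1)
    omega
  · intro a ha; linarith [one_le_f (h2 a ha)]
  · intro i a ha hia
    exact f_anti (gb_term_ge hr.pos) hia

lemma one_le_prod_f {s : Finset ℕ} (hs : ∀ a ∈ s, 2 ≤ a) : 1 ≤ ∏ a ∈ s, f a := by
  have := prod_le_prod_of_subset_of_one_le (f := f) (empty_subset s) (by simp)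
    (fun i hi _ => one_le_f (hs i hi))
  simpa using this

lemma prod_union_le' {s t : Finset ℕ} (hs : ∀ a ∈ s, 2 ≤ a) (ht : ∀ a ∈ t, 2 ≤ a) :
    ∏ a ∈ s ∪ t, f a ≤ (∏ a ∈ s, f a) * ∏ a ∈ t, f a := by
  rw [← prod_union_inter]
  have h1 : 1 ≤ ∏ a ∈ s ∩ t, f a := one_le_prod_f (fun a ha => hs a (mem_inter.1 ha).1)
  have h2 : 1 ≤ ∏ a ∈ s ∪ t, f a := one_le_prod_f (fun a ha => by
    rcases mem_union.1 ha with h | h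
    · exact hs a h
    · exact ht a h)
  nlinarith

lemma prod_biUnion_le {D : Finset ℕ} {T : ℕ → Finset ℕ} (hT : ∀ r ∈ D, ∀ a ∈ T r, 2 ≤ a) :
    ∏ a ∈ D.biUnion T, f a ≤ ∏ r ∈ D, ∏ a ∈ T r, f a := by
  induction D using Finset.induction_on with
  | empty => simp
  | insert r D hr ih =>
    rw [biUnion_insert, prod_insert hr]
    refine (prod_union_le' (hT r (mem_insert_self _ _)) ?_).trans ?_
    · intro a ha
      obtain ⟨s, hs, has⟩ := mem_biUnion.1 ha
      exact hT s (mem_insert_of_mem hs) a has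
    · apply mul_le_mul_of_nonneg_left (ih (fun s hs => hT s (mem_insert_of_mem hs)))
      linarith [one_le_prod_f (hT r (mem_insert_self _ _))]

/-- lower bounds for the primes in increasing order -/
def c : ℕ → ℕ
  | 0 => 2
  | 1 => 3
  | 2 => 5
  | 3 => 7
  | _ => 11

lemma primes_dense (s : Finset ℕ) (hs : ∀ p ∈ s, p.Prime) :
    ∏ a ∈ s, f a ≤ ∏ i ∈ range s.card, f (c i) ∧ ∏ i ∈ range s.card, c i ≤ ∏ a ∈ s, a := by
  have hc2 : ∀ i, 2 ≤ c i := by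
    intro i
    match i with
    | 0 => decide
    | 1 => decide
    | 2 => decide
    | 3 => decide
    | (k + 4) => simp [c]
  refine dense c f s ?_ ?_ ?_
  · intro T hT a haT hmax
    by_contra! hlt
    have hsub : T ⊆ (range (c (T.card - 1))).filter Nat.Prime := by
      intro b hb
      rw [mem_filter, mem_range]
      exact ⟨lt_of_le_of_lt (hmax b hb) hlt, hs b (hT hb)⟩
    have hcard := card_le_card hsub
    have hpos : 0 < T.card := card_pos.2 ⟨a, haT⟩
    obtain ⟨k, hk⟩ : ∃ k, T.card = k + 1 := ⟨T.card - 1, by omega⟩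
    rw [hk, Nat.add_sub_cancel] at hcard
    match k with
    | 0 => exact absurd hcard (by decide)
    | 1 => exact absurd hcard (by decide)
    | 2 => exact absurd hcard (by decide)
    | 3 => exact absurd hcard (by decide)
    | (k + 4) =>
      have : ((range (c (k + 4))).filter Nat.Prime).card = 4 := by
        show ((range 11).filter Nat.Prime).card = 4
        decide
      omega
  · intro a ha; linarith [one_le_f (hs a ha).two_le]
  · intro i a ha hia
    exact f_anti (hc2 i) hia

lemma A_bound_aux {n B : ℕ} (k : ℕ) (hn : n ≠ 0) (hB : n < B)
    (hk : B ≤ ∏ i ∈ range (k + 1), c i) :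
    ∏ p ∈ n.primeFactors, f p ≤ ∏ i ∈ range k, f (c i) := by
  obtain ⟨h1, h2⟩ := primes_dense n.primeFactors (fun p hp => Nat.prime_of_mem_primeFactors hp)
  have h3 : ∏ a ∈ n.primeFactors, a ≤ n :=
    Nat.le_of_dvd (Nat.pos_of_ne_zero hn) (Nat.prod_primeFactors_dvd n)
  have hc2 : ∀ i, 2 ≤ c i := by
    intro i
    match i with
    | 0 => decide
    | 1 => decide
    | 2 => decide
    | 3 => decide
    | (k + 4) => simp [c]
  have hcard : n.primeFactors.card ≤ k := by
    by_contra! hlt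
    have : ∏ i ∈ range (k + 1), c i ≤ ∏ i ∈ range n.primeFactors.card, c i := by
      apply prod_le_prod_of_subset_of_one_le' (range_subset_range.2 hlt)
      intro i _ _; have := hc2 i; omega
    omega
  refine h1.trans ?_
  apply prod_le_prod_of_subset_of_one_le (range_subset_range.2 hcard)
  · intro i _; linarith [one_le_f (hc2 i)]
  · intro i _ _; exact one_le_f (hc2 i)

lemma A_bound {n M : ℕ} (hn : n ≠ 0) (hM : n ≤ M) (h : M < 2310) :
    ∏ p ∈ n.primeFactors, f p ≤ (Fn M : ℝ) / 24 := by
  unfold Fn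
  split_ifs with h1 h2 h3 h4
  · refine (A_bound_aux (B := 2) 0 hn (by omega) (by decide)).trans ?_
    norm_num
  · refine (A_bound_aux (B := 6) 1 hn (by omega) (by decide)).trans ?_
    norm_num [prod_range_succ, c, f]
  · refine (A_bound_aux (B := 30) 2 hn (by omega) (by decide)).trans ?_
    norm_num [prod_range_succ, c, f]
  · refine (A_bound_aux (B := 210) 3 hn (by omega) (by decide)).trans ?_
    norm_num [prod_range_succ, c, f]
  · refine (A_bound_aux (B := 2310) 4 hn (by omega) (by decide)).trans ?_
    norm_num [prod_range_succ, c, f]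

lemma harm (B : ℕ) : ∑ i ∈ range B, (1 : ℝ) / ((i : ℝ) + 1) ≤ B / 6 + 5 := by
  induction B with
  | zero => norm_num
  | succ B ih =>
    rcases lt_or_ge B 5 with h | h
    · interval_cases B <;> norm_num [sum_range_succ]
    · rw [sum_range_succ]
      have h5 : (5 : ℝ) ≤ B := by exact_mod_cast h
      have : (1 : ℝ) / ((B : ℝ) + 1) ≤ 1 / 6 := by
        apply one_div_le_one_div_of_le <;> linarith
      push_cast
      linarith

lemma gb_large {r : ℕ} (hr : 173 ≤ r) : gb r r ≤ 9 / 8 := by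
  have hr' : (173 : ℝ) ≤ r := by exact_mod_cast hr
  have h1 : gb r r ≤ Real.exp (∑ i ∈ range r, (1 / (2 * r)) * ((1 : ℝ) / ((i : ℝ) + 1))) := by
    rw [Real.exp_sum]
    unfold gb
    apply prod_le_prod
    · intro i _; linarith [one_le_f (gb_term_ge (r := r) (i := i) (by omega))]
    · intro i _
      have : f (2 * r * (i + 1) + 1) = (1 / (2 * r)) * ((1 : ℝ) / ((i : ℝ) + 1)) + 1 := by
        unfold f
        push_cast
        have hi : (0 : ℝ) < (i : ℝ) + 1 := by positivity
        rw [add_sub_cancel_right]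
        field_simp
        ring
      rw [this]
      exact Real.add_one_le_exp _
  rw [← mul_sum] at h1
  have h2 : (1 / (2 * (r : ℝ))) * ∑ i ∈ range r, (1 : ℝ) / ((i : ℝ) + 1) ≤ 1 / 10 := by
    have := harm r
    rw [one_div_mul_eq_div, div_le_iff₀ (by linarith)]
    linarith
  have h3 := Real.exp_bound_div_one_sub_of_interval (x := 1 / 10) (by norm_num) (by norm_num)
  have h4 := Real.exp_le_exp.2 h2
  refine h1.trans (h4.trans (h3.trans ?_))
  norm_num

end TotEq

namespace TotEq
open Finset

lemma U_growth {X Y m n : ℕ} (hY : 0 < Y) (h : Y < X) (hmn : n < m) :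
    X ^ (m - n) * U X Y n < U X Y m := by
  have hs : 0 < X - Y := by omega
  apply Nat.lt_of_mul_lt_mul_right (a := X - Y)
  rw [mul_assoc, U_mul h.le, U_mul h.le, Nat.mul_sub, ← pow_add, Nat.sub_add_cancel hmn.le]
  have h1 : Y ^ m < X ^ (m - n) * Y ^ n := by
    calc Y ^ m = Y ^ (m - n) * Y ^ n := by rw [← pow_add, Nat.sub_add_cancel hmn.le]
      _ < _ := Nat.mul_lt_mul_of_pos_right (Nat.pow_lt_pow_left h (by omega)) (Nat.pow_pos hY)
  have h2 : Y ^ m < X ^ m := Nat.pow_lt_pow_left h (by omega)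
  omega

lemma val_le {r X Y n : ℕ} (hr : r.Prime) (hr2 : Odd r) (hc : X.Coprime Y) (hY : 0 < Y) (h : Y < X)
    (hX : X ≤ 80) (hn : ¬ r ∣ n) (hd : ¬ r ∣ X - Y) :
    (r < 173 → (U X Y n).factorization r ≤ 5) ∧
      (173 ≤ r → (U X Y n).factorization r + 2 ≤ r) := by
  set v := (U X Y n).factorization r with hv
  have h1 : r ^ v ∣ X ^ (r - 1) - Y ^ (r - 1) :=
    val_dvd hr hr2 hc h hn (Nat.ordProj_dvd _ _)
  constructor
  · intro hr173
    by_contra! h5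
    have hr2' : r ≠ 2 := by rintro rfl; exact absurd hr2 (by decide)
    have := (table1' hr hr2' hr173 hX hY h hc hd ((pow_dvd_pow r (by omega)).trans h1)).1
    exact this ((pow_dvd_pow r (by omega)).trans h1)
  · intro hr173
    have hlt : Y ^ (r - 1) < X ^ (r - 1) := Nat.pow_lt_pow_left h (by omega)
    have h2 := Nat.le_of_dvd (by omega) h1
    have h3 : r ^ v < r ^ (r - 1) := by
      have : X ^ (r - 1) ≤ r ^ (r - 1) := Nat.pow_le_pow_left (by omega) _
      have : 0 < Y ^ (r - 1) := Nat.pow_pos hY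
      omega
    have := (Nat.pow_lt_pow_iff_right hr.one_lt).1 h3
    omega

/-- primes attached to `r ∣ m` -/
def T (N X Y r : ℕ) : Finset ℕ := S N r ∪ (if r ∣ X - Y then {r} else ∅)

lemma S_two_le {N r a : ℕ} (ha : a ∈ S N r) : 2 ≤ a :=
  (Nat.prime_of_mem_primeFactors (mem_filter.1 ha).1).two_le

lemma T_prod_dvd {N X Y r : ℕ} (hr : r.Prime) (hr2 : Odd r) (hd : r ∣ X - Y)
    (hcard : (S N r).card ≤ 1) :
    ∏ p ∈ T N X Y r, f p ≤ (2 * r + 1) / (2 * ((r : ℝ) - 1)) := by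
  unfold T
  rw [if_pos hd]
  refine (prod_union_le' (fun a ha => S_two_le ha) (by simpa using hr.two_le)).trans ?_
  have h1 := S_prod hr hr2 hcard
  have hr1 : (2 : ℝ) ≤ r := by exact_mod_cast hr.two_le
  have h2 : gb r 1 = (2 * r + 1) / (2 * r) := by
    simp [gb, f]
  rw [h2] at h1
  rw [prod_singleton]
  calc _ ≤ (2 * (r : ℝ) + 1) / (2 * r) * f r :=
        mul_le_mul_of_nonneg_right h1 (by linarith [one_le_f hr.two_le])
    _ = _ := by
        unfold f
        have : (r : ℝ) - 1 ≠ 0 := by linarith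
        field_simp

lemma T_prod_ndvd {N X Y r B : ℕ} (hr : r.Prime) (hr2 : Odd r) (hd : ¬ r ∣ X - Y)
    (hcard : (S N r).card ≤ B) :
    ∏ p ∈ T N X Y r, f p ≤ gb r B := by
  unfold T
  rw [if_neg hd, union_empty]
  exact S_prod hr hr2 hcard

lemma T_bound {N X Y n r q : ℕ} (hq : q.Prime) (hq2 : Odd q) (hqr : q < r) (hr : r.Prime)
    (hc : X.Coprime Y) (hY : 0 < Y) (h : Y < X)
    (hX : X ≤ 80) (hn : ¬ r ∣ n) (hcard : (S N r).card ≤ 1 + (U X Y n).factorization r) :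
    ∏ p ∈ T N X Y r, f p ≤ (hb q : ℝ) / 8 := by
  have hq3 : 3 ≤ q := by
    have := hq.two_le
    rcases hq2 with ⟨k, hk⟩; omega
  have hr2 : Odd r := hr.odd_of_ne_two (by omega)
  have hqr2 : q + 2 ≤ r := by
    rcases hq2 with ⟨k, hk⟩; rcases hr2 with ⟨l, hl⟩; omega
  have hn0 : n ≠ 0 := by rintro rfl; simp at hn
  have hlow : (9 : ℝ) / 8 ≤ (hb q : ℝ) / 8 := by
    unfold hb; split_ifs <;> norm_num
  by_cases hd : r ∣ X - Y
  · have h0 : (U X Y n).factorization r = 0 :=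
      Nat.factorization_eq_zero_of_not_dvd (val_zero hr hc h hn hd)
    rw [h0] at hcard
    refine (T_prod_dvd hr hr2 hd hcard).trans ?_
    have hr5 : (5 : ℝ) ≤ r := by exact_mod_cast (by omega : 5 ≤ r)
    rw [div_le_div_iff₀ (by linarith) (by norm_num)]
    unfold hb
    split_ifs with h1 h2
    · push_cast; linarith
    · have : (7 : ℝ) ≤ r := by exact_mod_cast (by omega : 7 ≤ r)
      push_cast; linarith
    · have : (13 : ℝ) ≤ r := by exact_mod_cast (by omega : 13 ≤ r)
      push_cast; linarith
  · refine (T_prod_ndvd hr hr2 hd hcard).trans ?_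
    obtain ⟨v1, v2⟩ := val_le hr hr2 hc hY h hX hn hd
    rcases lt_or_ge r 173 with h173 | h173
    · refine (gb_mono hr.pos (show _ ≤ 6 by have := v1 h173; omega)).trans ?_
      unfold hb
      split_ifs with h1 h2
      · refine (gb_anti (r := 5) (by norm_num) (by omega)).trans ?_
        norm_num [gb, prod_range_succ, f]
      · refine (gb_anti (r := 7) (by norm_num) (by omega)).trans ?_
        norm_num [gb, prod_range_succ, f]
      · refine (gb_anti (r := 13) (by norm_num) (by omega)).trans ?_
        norm_num [gb, prod_range_succ, f]
    · refine (gb_mono hr.pos (show _ ≤ r by have := v2 h173; omega)).trans ?_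
      exact (gb_large h173).trans hlow

lemma card_D {X Y m N q : ℕ} (hq : q.Prime) (hq2 : Odd q) (hqm : q ∣ m) (hm : m ≠ 0)
    (hmin : ∀ r, r.Prime → r ∣ m → q ≤ r)
    (hc : X.Coprime Y) (hY : 0 < Y) (h : Y < X) (hN : N ≠ 0) (hUN : U X Y m ∣ N) :
    m.primeFactors.card ≤ (S N q).card := by
  have key : ∀ r ∈ m.primeFactors, ∃ P, P.Prime ∧ P ∈ S N q ∧ P ∣ X ^ (q * r) - Y ^ (q * r) ∧
      (r = q → P ∣ X ^ q - Y ^ q) ∧ (r ≠ q → ¬ P ∣ X ^ q - Y ^ q) := by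
    intro r hr
    have hrp := Nat.prime_of_mem_primeFactors hr
    have hrm := Nat.dvd_of_mem_primeFactors hr
    have mem : ∀ P, P.Prime → P ∣ X ^ m - Y ^ m → ¬ P ∣ X - Y → q ∣ P - 1 → P ∈ S N q := by
      intro P hP h1 h2 h3
      unfold S
      rw [mem_filter, Nat.mem_primeFactors]
      refine ⟨⟨hP, ?_, hN⟩, h3⟩
      rw [← U_mul h.le] at h1
      rcases hP.dvd_mul.1 h1 with h4 | h4
      · exact h4.trans hUN
      · exact absurd h4 h2
    by_cases hrq : r = q
    · obtain ⟨P, hP, h1, h2⟩ := exists_prime_q hq hq2 hc hY h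
      refine ⟨P, hP, mem P hP (h1.trans (pow_dvd hqm)) h2 ?_, h1.trans (pow_dvd (Dvd.intro _ rfl)),
        fun _ => h1, fun hh => absurd hrq hh⟩
      exact dvd_pred (k := 1) hP hq one_ne_zero hc h.le (by simpa using h1) (by simpa using h2)
    · have hlt : q < r := lt_of_le_of_ne (hmin r hrp hrm) (Ne.symm hrq)
      obtain ⟨P, hP, h1, h2, h3⟩ := exists_prime_qr hq hq2 hrp hlt hc hY h
      have hqrm : q * r ∣ m :=
        ((Nat.coprime_primes hq hrp).2 hlt.ne).mul_dvd_of_dvd_of_dvd hqm hrm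
      refine ⟨P, hP, mem P hP (h1.trans (pow_dvd hqrm)) ?_ ?_, h1, fun hh => absurd hh hrq, fun _ => h2⟩
      · intro h4
        apply h2
        have := pow_dvd (X := X) (Y := Y) (one_dvd q)
        rw [pow_one, pow_one] at this
        exact h4.trans this
      · exact dvd_pred hP hq hrp.ne_zero hc h.le h1 h3
  choose! g hg using key
  apply card_le_card_of_injOn g
  · intro r hr; exact (hg r hr).2.1
  · intro r hr s hs hrs
    have hr := mem_coe.1 hr
    have hs := mem_coe.1 hs
    obtain ⟨hP, _, a1, a2, a3⟩ := hg r hr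
    obtain ⟨_, _, b1, b2, b3⟩ := hg s hs
    by_contra hne
    have hrp := Nat.prime_of_mem_primeFactors hr
    have hsp := Nat.prime_of_mem_primeFactors hs
    have hYn := not_dvd_right hP hc h.le a1 (mul_ne_zero hq.ne_zero hrp.ne_zero)
    rw [← hrs] at b1 b2 b3
    by_cases hrq : r = q
    · exact b3 (fun e => hne (hrq.trans e.symm)) (a2 hrq)
    · have := dvd_gcd hP h.le hYn a1 b1
      rw [Nat.gcd_mul_left, (Nat.coprime_primes hrp hsp).2 hne, mul_one] at this
      exact a3 hrq this

lemma cover {X Y m N z d : ℕ} (hc : X.Coprime Y) (h : Y < X) (hm : m ≠ 0)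
    (hz : z ≠ 0) (hd : d ≠ 0) (hN : N ≠ 0) (hNe : N = z * (d ^ (m - 1) * U X Y m)) :
    N.primeFactors ⊆ (z * d).primeFactors ∪ m.primeFactors.biUnion (T N X Y) := by
  intro P hP
  have hPp := Nat.prime_of_mem_primeFactors hP
  have hPN := Nat.dvd_of_mem_primeFactors hP
  rw [mem_union]
  by_cases hzd : P ∣ z * d
  · left; exact Nat.mem_primeFactors.2 ⟨hPp, hzd, mul_ne_zero hz hd⟩
  right
  have hPU : P ∣ U X Y m := by
    have hPN' := hPN
    rw [hNe] at hPN'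
    rcases hPp.dvd_mul.1 hPN' with h1 | h1
    · exact absurd (h1.mul_right d) hzd
    rcases hPp.dvd_mul.1 h1 with h2 | h2
    · exact absurd ((hPp.dvd_of_dvd_pow h2).mul_left z) hzd
    · exact h2
  have hdiff := dvd_diff_of_dvd_U h.le hPU
  have hPY := not_dvd_right hPp hc h.le hdiff hm
  have hPX := not_dvd_left hPp hc h.le hdiff hm
  rw [mem_biUnion]
  by_cases hs : P ∣ X - Y
  · have hPm := dvd_of_dvd_sub hPp h.le hPY hs hPU
    refine ⟨P, Nat.mem_primeFactors.2 ⟨hPp, hPm, hm⟩, ?_⟩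
    unfold T
    rw [if_pos hs]; simp
  · have hg := dvd_gcd hPp h.le hPY hdiff (fermat hPp h.le hPY hPX)
    have hne : Nat.gcd m (P - 1) ≠ 1 := by
      intro e; rw [e, pow_one, pow_one] at hg; exact hs hg
    obtain ⟨r, hr, hrg⟩ := Nat.exists_prime_and_dvd hne
    refine ⟨r, Nat.mem_primeFactors.2 ⟨hr, hrg.trans (Nat.gcd_dvd_left _ _), hm⟩, ?_⟩
    unfold T S
    rw [mem_union, mem_filter]
    exact Or.inl ⟨hP, hrg.trans (Nat.gcd_dvd_right _ _)⟩

lemma gb_eq (q t : ℕ) (hq : 0 < q) : gb q t = (cN q t : ℝ) / cD q t := by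
  induction t with
  | zero => simp [gb, cN, cD]
  | succ t ih =>
    have : gb q (t + 1) = gb q t * f (2 * q * (t + 1) + 1) := by
      unfold gb; rw [prod_range_succ]
    rw [this, ih]
    unfold f
    simp only [cN, cD]
    push_cast
    rw [add_sub_cancel_right, div_mul_div_comm]

lemma cD_pos (q t : ℕ) (hq : 0 < q) : 0 < cD q t := by
  induction t with
  | zero => simp [cD]
  | succ t ih => simp only [cD]; positivity

lemma chk_contra {X Y d q t : ℕ} {A G : ℝ} (hc : chk X Y d q t = true)
    (hA : A ≤ (Fn (d * d * (X - Y)) : ℝ) / 24) (hG0 : 0 ≤ G)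
    (hG : G ≤ gb (q0 q) (t + 1) * ((hb q : ℝ) / 8) ^ t) (h : (d : ℝ) * X < A * G) : False := by
  unfold chk at hc
  rw [Nat.blt_eq] at hc
  have hq0 : 0 < q0 q := by unfold q0; split_ifs <;> norm_num
  have hD := cD_pos (q0 q) (t + 1) hq0
  rw [gb_eq _ _ hq0] at hG
  have hc' : (Fn (d * d * (X - Y)) : ℝ) * cN (q0 q) (t + 1) * (hb q : ℝ) ^ t
      < d * X * 24 * cD (q0 q) (t + 1) * 8 ^ t := by exact_mod_cast hc
  have hD' : (0 : ℝ) < cD (q0 q) (t + 1) := by exact_mod_cast hD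
  have h1 : A * G ≤ (Fn (d * d * (X - Y)) : ℝ) / 24 *
      ((cN (q0 q) (t + 1) : ℝ) / cD (q0 q) (t + 1) * ((hb q : ℝ) / 8) ^ t) :=
    mul_le_mul hA hG hG0 (by positivity)
  have h2 : (Fn (d * d * (X - Y)) : ℝ) / 24 *
      ((cN (q0 q) (t + 1) : ℝ) / cD (q0 q) (t + 1) * ((hb q : ℝ) / 8) ^ t)
      = ((Fn (d * d * (X - Y)) : ℝ) * cN (q0 q) (t + 1) * (hb q : ℝ) ^ t) /
        (24 * cD (q0 q) (t + 1) * 8 ^ t) := by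
    rw [div_pow]; field_simp
  rw [h2] at h1
  have h3 := lt_of_lt_of_le h h1
  rw [lt_div_iff₀ (by positivity)] at h3
  linarith

/-- basic consequences of the equation -/
lemma basics {X Y d z m n : ℕ} (hY : 0 < Y) (h : Y < X) (hd : 0 < d) (hz : 0 < z)
    (hn : 0 < n) (hmn : n < m)
    (heq : Nat.totient (z * (d ^ (m - 1) * U X Y m)) = z * (d ^ (n - 1) * U X Y n)) :
    ((d : ℝ) * X < ∏ p ∈ (z * (d ^ (m - 1) * U X Y m)).primeFactors, f p) ∧
    ∀ r, r.Prime → (S (z * (d ^ (m - 1) * U X Y m)) r).card ≤ 1 + (U X Y n).factorization r := by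
  have hX : 0 < X := by omega
  have hUm : U X Y m ≠ 0 := U_ne_zero hX (by omega)
  have hUn : U X Y n ≠ 0 := U_ne_zero hX (by omega)
  have hdm : d ^ (m - 1) ≠ 0 := (Nat.pow_pos hd).ne'
  have hdn : d ^ (n - 1) ≠ 0 := (Nat.pow_pos hd).ne'
  set N := z * (d ^ (m - 1) * U X Y m) with hNdef
  have hN : N ≠ 0 := mul_ne_zero hz.ne' (mul_ne_zero hdm hUm)
  constructor
  · have hlt : (d * X) * Nat.totient N < N := by
      rw [heq, hNdef]
      calc d * X * (z * (d ^ (n - 1) * U X Y n))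
          ≤ (d * X) ^ (m - n) * (z * (d ^ (n - 1) * U X Y n)) :=
            Nat.mul_le_mul_right _ (Nat.le_self_pow (by omega) _)
        _ = z * (d ^ (m - 1) * (X ^ (m - n) * U X Y n)) := by
            have : m - 1 = (m - n) + (n - 1) := by omega
            rw [this, pow_add, mul_pow]; ring
        _ < _ := by
            apply Nat.mul_lt_mul_of_pos_left _ hz
            exact Nat.mul_lt_mul_of_pos_left (U_growth hY h hmn) (Nat.pow_pos hd)
    have hlt' : ((d : ℝ) * X) * (Nat.totient N : ℝ) < N := by exact_mod_cast hlt
    have hphi : (0 : ℝ) < Nat.totient N := by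
      exact_mod_cast Nat.totient_pos.2 (Nat.pos_of_ne_zero hN)
    rw [ratio (N := N), mul_comm] at hlt'
    exact lt_of_mul_lt_mul_left hlt' hphi.le
  · intro r hr
    have h1 := card_S hN hr
    rw [heq, hNdef, Nat.factorization_mul hz.ne' (mul_ne_zero hdm hUm),
      Nat.factorization_mul hz.ne' (mul_ne_zero hdn hUn), Nat.factorization_mul hdm hUm,
      Nat.factorization_mul hdn hUn, Nat.factorization_pow, Nat.factorization_pow] at h1
    simp only [Finsupp.add_apply, Finsupp.smul_apply, smul_eq_mul] at h1
    have h2 : (n - 1) * d.factorization r ≤ (m - 1) * d.factorization r :=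
      Nat.mul_le_mul_right _ (by omega)
    rw [← hNdef] at h1
    omega

lemma core_odd {X Y d z m n q : ℕ} (hc : X.Coprime Y) (hY : 0 < Y) (h : Y < X) (hd : 0 < d)
    (hz : 0 < z) (hzle : z ≤ d * (X - Y)) (hn : 0 < n) (hmn : n < m) (hgcd : Nat.gcd m n = 1)
    (hdX : d * X ≤ 80)
    (heq : Nat.totient (z * (d ^ (m - 1) * U X Y m)) = z * (d ^ (n - 1) * U X Y n))
    (hq : q.Prime) (hq2 : Odd q) (hqm : q ∣ m) (hmin : ∀ r, r.Prime → r ∣ m → q ≤ r)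
    (hq173 : q < 173) : False := by
  obtain ⟨hlt, hS⟩ := basics hY h hd hz hn hmn heq
  have hX : 0 < X := by omega
  have hX80 : X ≤ 80 := by nlinarith
  have hm0 : m ≠ 0 := by omega
  set N := z * (d ^ (m - 1) * U X Y m) with hNdef
  have hN : N ≠ 0 := mul_ne_zero hz.ne' (mul_ne_zero (Nat.pow_pos hd).ne' (U_ne_zero hX hm0))
  have hndvd : ∀ r, r.Prime → r ∣ m → ¬ r ∣ n := by
    intro r hr h1 h2
    exact hr.one_lt.ne' (Nat.dvd_one.1 (hgcd ▸ Nat.dvd_gcd h1 h2))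
  have hq3 : 3 ≤ q := by
    have := hq.two_le
    rcases hq2 with ⟨k, hk⟩; omega
  set D := m.primeFactors with hD
  have hqD : q ∈ D := Nat.mem_primeFactors.2 ⟨hq, hqm, hm0⟩
  have hT2 : ∀ r ∈ D, ∀ a ∈ T N X Y r, 2 ≤ a := by
    intro r hr a ha
    unfold T at ha
    rcases mem_union.1 ha with h1 | h1
    · exact S_two_le h1
    · split_ifs at h1
      · rw [mem_singleton.1 h1]; exact (Nat.prime_of_mem_primeFactors hr).two_le
      · simp at h1
  set A := ∏ p ∈ (z * d).primeFactors, f p with hAdef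
  have hA : A ≤ (Fn (d * d * (X - Y)) : ℝ) / 24 := by
    apply A_bound (mul_ne_zero hz.ne' hd.ne')
    · calc z * d ≤ d * (X - Y) * d := Nat.mul_le_mul_right _ hzle
        _ = _ := by ring
    · have : d * (X - Y) ≤ d * X - d := by
        rw [Nat.mul_sub]; have := Nat.mul_le_mul_left d hY; omega
      have h3 : d * d * (X - Y) ≤ d * (d * X - d) := by
        rw [mul_assoc]; exact Nat.mul_le_mul_left _ this
      have h4 : d * (d * X - d) ≤ d * (80 - d) := Nat.mul_le_mul_left _ (by omega)
      have h5 : d ≤ 80 := by nlinarith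
      have h6 : d * (80 - d) ≤ 1600 := by
        obtain ⟨e, he⟩ : ∃ e, 80 = d + e := ⟨80 - d, by omega⟩
        have : 80 - d = e := by omega
        rw [this]
        zify at *
        nlinarith [sq_nonneg ((d : ℤ) - e)]
      omega
  set t := (U X Y n).factorization q with ht
  have hA1 : 1 ≤ A := one_le_prod_f fun a ha => (Nat.prime_of_mem_primeFactors ha).two_le
  have hcardD : D.card ≤ 1 + t :=
    (card_D hq hq2 hqm hm0 hmin hc hY h hN (hNdef ▸ ((Dvd.intro_left _ rfl : U X Y m ∣ d ^ (m - 1) * U X Y m).mul_left z))).trans (hS q hq)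
  set G := ∏ r ∈ D, ∏ a ∈ T N X Y r, f a with hGdef
  have hAG : (d : ℝ) * X < A * G := by
    refine lt_of_lt_of_le hlt ?_
    calc _ ≤ ∏ p ∈ (z * d).primeFactors ∪ D.biUnion (T N X Y), f p := by
          apply prod_le_prod_of_subset_of_one_le (cover hc h hm0 hz.ne' hd.ne' hN hNdef)
          · intro p hp
            linarith [one_le_f (Nat.prime_of_mem_primeFactors hp).two_le]
          · intro p hp _
            apply one_le_f
            rcases mem_union.1 hp with h1 | h1
            · exact (Nat.prime_of_mem_primeFactors h1).two_le
            · obtain ⟨r, hr, hpr⟩ := mem_biUnion.1 h1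
              exact hT2 r hr p hpr
      _ ≤ A * ∏ p ∈ D.biUnion (T N X Y), f p := by
          apply prod_union_le'
          · intro a ha; exact (Nat.prime_of_mem_primeFactors ha).two_le
          · intro a ha
            obtain ⟨r, hr, hpr⟩ := mem_biUnion.1 ha
            exact hT2 r hr a hpr
      _ ≤ A * G := mul_le_mul_of_nonneg_left (prod_biUnion_le hT2) (by linarith)
  have hG0 : 0 ≤ G := by
    apply prod_nonneg
    intro r hr
    linarith [one_le_prod_f (hT2 r hr)]
  have hhb : (1 : ℝ) ≤ (hb q : ℝ) / 8 := by
    unfold hb; split_ifs <;> norm_num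
  have hG : G ≤ (∏ a ∈ T N X Y q, f a) * ((hb q : ℝ) / 8) ^ t := by
    rw [hGdef, ← mul_prod_erase D _ hqD]
    apply mul_le_mul_of_nonneg_left _ (by linarith [one_le_prod_f (hT2 q hqD)])
    calc _ ≤ ∏ r ∈ D.erase q, (hb q : ℝ) / 8 := by
          apply prod_le_prod
          · intro r hr
            linarith [one_le_prod_f (hT2 r (mem_of_mem_erase hr))]
          · intro r hr
            have hrD := mem_of_mem_erase hr
            have hrp := Nat.prime_of_mem_primeFactors hrD
            have hrm := Nat.dvd_of_mem_primeFactors hrD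
            exact T_bound hq hq2 (lt_of_le_of_ne (hmin r hrp hrm) (ne_of_mem_erase hr).symm) hrp
              hc hY h hX80 (hndvd r hrp hrm) (hS r hrp)
      _ = ((hb q : ℝ) / 8) ^ (D.card - 1) := by
          rw [prod_const, card_erase_of_mem hqD]
      _ ≤ _ := pow_le_pow_right₀ hhb (by omega)
  obtain ⟨c1, c2, c3, c4, c5, c6, c7⟩ := table2' hY h hd hdX
  by_cases hdiv : q ∣ X - Y
  · have h0 : t = 0 := Nat.factorization_eq_zero_of_not_dvd (val_zero hq hc h (hndvd q hq hqm) hdiv)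
    have hSq := hS q hq
    rw [← ht, h0] at hSq
    have h1 := T_prod_dvd (X := X) (Y := Y) hq hq2 hdiv hSq
    rw [h0, pow_zero, mul_one] at hG
    have hq3' : (3 : ℝ) ≤ q := by exact_mod_cast hq3
    have h2 : (2 * (q : ℝ) + 1) / (2 * ((q : ℝ) - 1)) ≤ 7 / 4 := by
      rw [div_le_div_iff₀ (by linarith) (by norm_num)]; linarith
    have hX4 : 4 ≤ X := by
      have := Nat.le_of_dvd (by omega) hdiv
      omega
    have h3 := c1 hX4
    have h3' : (Fn (d * d * (X - Y)) : ℝ) * 7 < d * X * 24 * 4 := by exact_mod_cast h3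
    have h4 : A * G ≤ (Fn (d * d * (X - Y)) : ℝ) / 24 * (7 / 4) :=
      mul_le_mul hA (hG.trans (h1.trans h2)) hG0 (by positivity)
    linarith
  · have h1 := T_prod_ndvd (X := X) (Y := Y) hq hq2 hdiv (hS q hq)
    rw [← ht, add_comm] at h1
    have hq0 : 0 < q0 q := by unfold q0; split_ifs <;> norm_num
    have hq0le : q0 q ≤ q := by unfold q0; split_ifs <;> omega
    have hG' : G ≤ gb (q0 q) (t + 1) * ((hb q : ℝ) / 8) ^ t :=
      hG.trans (mul_le_mul_of_nonneg_right (h1.trans (gb_anti hq0 hq0le)) (by positivity))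
    have hDt : q ^ t ∣ X ^ (q - 1) - Y ^ (q - 1) :=
      val_dvd hq hq2 hc h (hndvd q hq hqm) (Nat.ordProj_dvd _ _)
    have hchk : chk X Y d q t = true := by
      rcases lt_or_ge t 2 with ht2 | ht2
      · have tier : ∀ q', q0 q = q0 q' → hb q = hb q' → chk X Y d q' t = true →
            chk X Y d q t = true := by
          intro q' e1 e2 e3
          unfold chk at *
          rw [e1, e2]; exact e3
        rcases lt_or_ge q 5 with h5 | h5
        · have hq3e : q = 3 := by
            rcases hq2 with ⟨k, hk⟩; omega
          obtain ht0 | ht1 : t = 0 ∨ t = 1 := by omega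
          · rw [ht0, hq3e]; exact c2
          · rw [ht1, hq3e]
            apply c3
            rw [ht1, pow_one, hq3e] at hDt
            exact not_dvd_left (by norm_num) hc h.le hDt (by norm_num)
        · rcases lt_or_ge q 11 with h11 | h11
          · apply tier 5
            · unfold q0; rw [if_neg (by omega), if_pos h11]; norm_num
            · unfold hb; rw [if_neg (by omega), if_pos h11]; norm_num
            · obtain ht0 | ht1 : t = 0 ∨ t = 1 := by omega
              · rw [ht0]; exact c4
              · rw [ht1]; exact c5
          · apply tier 11
            · unfold q0; rw [if_neg (by omega), if_neg (by omega)]; norm_num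
            · unfold hb; rw [if_neg (by omega), if_neg (by omega)]; norm_num
            · obtain ht0 | ht1 : t = 0 ∨ t = 1 := by omega
              · rw [ht0]; exact c6
              · rw [ht1]; exact c7
      · have ht5 := (val_le hq hq2 hc hY h hX80 (hndvd q hq hqm) hdiv).1 hq173
        exact (table1' hq (by omega) hq173 hX80 hY h hc hdiv ((pow_dvd_pow q ht2).trans hDt)).2
          t (by omega) hDt d hd hdX
    exact chk_contra hchk hA hG0 hG' hAG

lemma core_two {X Y d z m n : ℕ} (hc : X.Coprime Y) (hY : 0 < Y) (h : Y < X) (hd : 0 < d)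
    (hz : 0 < z) (hzle : z ≤ d * (X - Y)) (hn : 0 < n) (hmn : n < m) (hgcd : Nat.gcd m n = 1)
    (heq : Nat.totient (z * (d ^ (m - 1) * U X Y m)) = z * (d ^ (n - 1) * U X Y n))
    (hqm : 2 ∣ m) : False := by
  obtain ⟨hlt, hS⟩ := basics hY h hd hz hn hmn heq
  have hm0 : m ≠ 0 := by omega
  have hn2 : ¬ 2 ∣ n := by
    intro h2
    have := Nat.dvd_gcd hqm h2
    rw [hgcd] at this; omega
  have hU : ¬ 2 ∣ U X Y n := by
    by_cases hdiv : 2 ∣ X - Y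
    · exact val_zero Nat.prime_two hc h hn2 hdiv
    · intro hU
      have h1 := dvd_diff_of_dvd_U h.le hU
      have hXn := not_dvd_left Nat.prime_two hc h.le h1 (by omega)
      have hYn := not_dvd_right Nat.prime_two hc h.le h1 (by omega)
      omega
  have hS2 := hS 2 Nat.prime_two
  rw [Nat.factorization_eq_zero_of_not_dvd hU, add_zero] at hS2
  set N := z * (d ^ (m - 1) * U X Y m) with hNdef
  have hN : N ≠ 0 :=
    mul_ne_zero hz.ne' (mul_ne_zero (Nat.pow_pos hd).ne' (U_ne_zero (by omega) hm0))
  have hS3 : ∀ a ∈ S N 2, 3 ≤ a := by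
    intro a ha
    have := S_two_le ha
    have := (mem_filter.1 ha).2
    omega
  have hSp : ∏ p ∈ S N 2, f p ≤ 3 / 2 := by
    rcases Nat.le_one_iff_eq_zero_or_eq_one.1 hS2 with h0 | h0
    · rw [card_eq_zero.1 h0]; norm_num
    · obtain ⟨a, ha⟩ := card_eq_one.1 h0
      have h3 := hS3 a (by rw [ha]; simp)
      rw [ha, prod_singleton]
      have := f_anti (by norm_num) h3
      refine this.trans ?_
      norm_num [f]
  have hsub : ∀ p ∈ N.primeFactors, p ≠ 2 → p ∈ S N 2 := by
    intro p hp hp2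
    unfold S
    rw [mem_filter]
    refine ⟨hp, ?_⟩
    rcases (Nat.prime_of_mem_primeFactors hp).odd_of_ne_two hp2 with ⟨k, hk⟩
    omega
  have hle3 : ∏ p ∈ N.primeFactors, f p ≤ 3 := by
    calc _ ≤ ∏ p ∈ {2} ∪ S N 2, f p := by
          apply prod_le_prod_of_subset_of_one_le
          · intro p hp
            by_cases hp2 : p = 2
            · rw [hp2]; simp
            · exact mem_union_right _ (hsub p hp hp2)
          · intro p hp
            linarith [one_le_f (Nat.prime_of_mem_primeFactors hp).two_le]
          · intro p hp _
            apply one_le_f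
            rcases mem_union.1 hp with h1 | h1
            · rw [mem_singleton.1 h1]
            · exact S_two_le h1
      _ ≤ (∏ p ∈ {2}, f p) * ∏ p ∈ S N 2, f p := prod_union_le' (by simp) (fun a ha => S_two_le ha)
      _ ≤ 2 * (3 / 2) := by
          have : (∏ p ∈ ({2} : Finset ℕ), f p) = 2 := by norm_num [f]
          rw [this]
          exact mul_le_mul_of_nonneg_left hSp (by norm_num)
      _ = 3 := by norm_num
  have hx3 : d * X < 3 := by exact_mod_cast lt_of_lt_of_le hlt hle3
  have hX2 : X = 2 := by nlinarith
  have hd1 : d = 1 := by nlinarith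
  have hY1 : Y = 1 := by omega
  have hz1 : z = 1 := by subst hX2 hd1 hY1; omega
  have hodd : ¬ 2 ∣ N := by
    rw [hNdef, hz1, hd1, hX2, hY1, one_mul, one_pow, one_mul]
    intro hh
    have := dvd_diff_of_dvd_U (by norm_num) hh
    exact not_dvd_left Nat.prime_two (by norm_num) (by norm_num) this hm0 (by norm_num)
  have hle : ∏ p ∈ N.primeFactors, f p ≤ ∏ p ∈ S N 2, f p := by
    apply prod_le_prod_of_subset_of_one_le
    · intro p hp
      apply hsub p hp
      rintro rfl
      exact hodd (Nat.dvd_of_mem_primeFactors hp)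
    · intro p hp
      linarith [one_le_f (Nat.prime_of_mem_primeFactors hp).two_le]
    · intro p hp _
      exact one_le_f (S_two_le hp)
  rw [hd1, hX2] at hlt
  push_cast at hlt
  linarith

lemma quot_eq {X Y d m : ℕ} (h : Y < X) (hd : 0 < d) (hm : 0 < m) :
    ((d * X) ^ m - (d * Y) ^ m) / (d * X - d * Y) = d ^ (m - 1) * U X Y m := by
  apply Nat.div_eq_of_eq_mul_left
  · rw [← Nat.mul_sub]; exact Nat.mul_pos hd (by omega)
  · rw [mul_pow, mul_pow, ← Nat.mul_sub, ← Nat.mul_sub, ← U_mul h.le]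
    obtain ⟨k, rfl⟩ : ∃ k, m = k + 1 := ⟨m - 1, by omega⟩
    rw [Nat.add_sub_cancel, pow_succ]; ring

end TotEq

theorem minFac_ge_173 (x y z m n : ℕ) (hx : 0 < x) (hy : 0 < y) (hz : 0 < z)
    (hm : 0 < m) (hn : 0 < n) (hxy : y < x) (hzxy : z ≤ x - y)
    (hgcd : Nat.gcd m n = 1) (hmn : n < m)
    (heq : Nat.totient (z * ((x ^ m - y ^ m) / (x - y))) =
      z * ((x ^ n - y ^ n) / (x - y)))
    (hx80 : x ≤ 80) :
    (∀ q : ℕ, q.Prime → q ∣ m → 173 ≤ q) ∧ 173 ≤ m.minFac := by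
  have key : 173 ≤ m.minFac := by
    by_contra! hlt
    have hq : m.minFac.Prime := Nat.minFac_prime (by omega)
    obtain ⟨d, X, Y, hd, hc, hX, hY⟩ := Nat.exists_coprime' (m := x) (n := y) (Nat.gcd_pos_of_pos_left _ hx)
    rw [mul_comm] at hX hY
    subst hX hY
    have hYX : Y < X := Nat.lt_of_mul_lt_mul_left hxy
    have hY0 : 0 < Y := Nat.pos_of_mul_pos_left hy
    rw [TotEq.quot_eq hYX hd hm, TotEq.quot_eq hYX hd hn] at heq
    rw [← Nat.mul_sub] at hzxy
    rcases hq.eq_two_or_odd' with h2 | h2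
    · exact TotEq.core_two hc hY0 hYX hd hz hzxy hn hmn hgcd heq (h2 ▸ Nat.minFac_dvd m)
    · exact TotEq.core_odd hc hY0 hYX hd hz hzxy hn hmn hgcd hx80 heq hq h2 (Nat.minFac_dvd m)
        (fun r hr hrm => Nat.minFac_le_of_dvd hr.two_le hrm) hlt
  exact ⟨fun q hq hqm => key.trans (Nat.minFac_le_of_dvd hq.two_le hqm), key⟩
end
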